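/- For any positive integers m and n, the Noether number of G = C_m ⋉_φ C_{mn} equals mn + m − 1. In particular β(G) = d(G) + 1, where d(G) = mn + m − 2 is the small Davenport constant. -/

import Mathlib

open MvPolynomial

/-- A sequence (multiset) over `G` is product-one if its terms can be ordered so
that their product equals `1`. -/
def IsProductOne {G : Type*} [Group G] (S : Multiset G) : Prop :=
  ∃ l : List G, (l : Multiset G) = S ∧ l.prod = 1

/-- A sequence is product-one free if it has no nonempty product-one subsequence. -/
def ProductOneFree {G : Type*} [Group G] (S : Multiset G) : Prop :=
  ∀ T ≤ S, T ≠ 0 → ¬ IsProductOne T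

/-- The action of a group element on polynomial functions, induced by a linear
representation `ρ` on the variables. -/
noncomputable def polyAct {F : Type*} [Field F] {G : Type*} [Group G] {d : ℕ}
    (ρ : G →* Matrix.GeneralLinearGroup (Fin d) F) (g : G)
    (f : MvPolynomial (Fin d) F) : MvPolynomial (Fin d) F :=
  MvPolynomial.aeval (fun i => ∑ j, ((ρ g).val i j) • (MvPolynomial.X j)) f

/-- A polynomial invariant of the representation `ρ`. -/
def IsPolyInvariant {F : Type*} [Field F] {G : Type*} [Group G] {d : ℕ}
    (ρ : G →* Matrix.GeneralLinearGroup (Fin d) F)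
    (f : MvPolynomial (Fin d) F) : Prop :=
  ∀ g : G, polyAct ρ g f = f

/-- `β(G, V) ≤ s`: the invariant ring is generated as an algebra by its
invariants of degree at most `s`. -/
def NoetherBoundLe {F : Type*} [Field F] {G : Type*} [Group G] {d : ℕ}
    (ρ : G →* Matrix.GeneralLinearGroup (Fin d) F) (s : ℕ) : Prop :=
  ∀ f : MvPolynomial (Fin d) F, IsPolyInvariant ρ f →
    f ∈ Algebra.adjoin F
      {h : MvPolynomial (Fin d) F | IsPolyInvariant ρ h ∧ h.totalDegree ≤ s}


namespace NN

/-- Olson: `D(C_p^r) ≤ r(p-1)+1`, by Chevalley-Warning. -/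
lemma olson {p : ℕ} [Fact p.Prime] {ι κ : Type*} [Fintype κ] (s : Finset ι)
    (c : κ → ι → ZMod p) (hs : Fintype.card κ * (p - 1) < s.card) :
    ∃ t ⊆ s, t.Nonempty ∧ ∀ k, ∑ i ∈ t, c k i = 0 := by
  classical
  let f : κ → MvPolynomial s (ZMod p) := fun k => ∑ i : s, c k i • X i ^ (p - 1)
  have hp : p.Prime := Fact.out
  have hdeg : (∑ k, (f k).totalDegree) < Fintype.card s := by
    calc (∑ k, (f k).totalDegree) ≤ ∑ k : κ, (p - 1) := by
          gcongr with k
          apply totalDegree_finsetSum_le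
          rintro i _
          exact (totalDegree_smul_le ..).trans (totalDegree_X_pow ..).le
      _ < _ := by simpa using hs
  have hpN := char_dvd_card_solutions_of_fintype_sum_lt p hdeg
  let z : {x : s → ZMod p // ∀ k, eval x (f k) = 0} :=
    ⟨0, fun k => by simp [f, map_sum, hp.one_lt, tsub_eq_zero_iff_le]⟩
  have hN₀ : 0 < Fintype.card {x : s → ZMod p // ∀ k, eval x (f k) = 0} :=
    @Fintype.card_pos _ _ ⟨z⟩
  obtain ⟨x, hx⟩ := Fintype.exists_ne_of_one_lt_card (hp.one_lt.trans_le <|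
    Nat.le_of_dvd hN₀ hpN) z
  refine ⟨({a | x.1 a ≠ 0} : Finset s).map ⟨(↑), Subtype.val_injective⟩, ?_, ?_, ?_⟩
  · simp +contextual [Finset.subset_iff]
  · rw [Finset.map_nonempty]
    rw [← Subtype.coe_ne_coe, Function.ne_iff] at hx
    obtain ⟨a, ha⟩ := hx
    exact ⟨a, by simpa [z] using ha⟩
  · intro k
    have := x.2 k
    simpa [f, ZMod.pow_card_sub_one, Finset.sum_filter] using this

lemma olson2 {p : ℕ} [Fact p.Prime] {ι : Type*} (s : Finset ι)
    (c d : ι → ZMod p) (hs : 2 * (p - 1) < s.card) :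
    ∃ t ⊆ s, t.Nonempty ∧ ∑ i ∈ t, c i = 0 ∧ ∑ i ∈ t, d i = 0 := by
  obtain ⟨t, h1, h2, h3⟩ := olson (κ := Bool) s (fun b => if b then c else d) (by simpa using hs)
  exact ⟨t, h1, h2, by simpa using h3 true, by simpa using h3 false⟩

lemma short {p : ℕ} [Fact p.Prime] {ι : Type*} (s : Finset ι)
    (c d : ι → ZMod p) (hs : 3 * (p - 1) < s.card) :
    ∃ t ⊆ s, t.Nonempty ∧ t.card ≤ p ∧ ∑ i ∈ t, c i = 0 ∧ ∑ i ∈ t, d i = 0 := by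
  classical
  have hp : p.Prime := Fact.out
  have hp2 := hp.two_le
  obtain ⟨s', hs', hcard⟩ := Finset.exists_subset_card_eq (s := s) (n := 3 * (p - 1) + 1) hs
  obtain ⟨t, h1, h2, h3⟩ := olson (κ := Fin 3) s' ![c, d, fun _ => 1] (by simp; omega)
  have hc : ∑ i ∈ t, c i = 0 := by simpa using h3 0
  have hd : ∑ i ∈ t, d i = 0 := by simpa using h3 1
  have he : (t.card : ZMod p) = 0 := by simpa using h3 2
  rw [ZMod.natCast_eq_zero_iff] at he
  have htc := Finset.card_le_card h1
  by_cases hle : t.card ≤ p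
  · exact ⟨t, h1.trans hs', h2, hle, hc, hd⟩
  have h2p : t.card = 2 * p := by
    obtain ⟨q, hq⟩ := he
    have : q < 3 := by
      by_contra hh
      have : p * 3 ≤ p * q := Nat.mul_le_mul_left _ (by omega)
      omega
    interval_cases q <;> omega
  obtain ⟨u, hu, hcu⟩ := Finset.exists_subset_card_eq (s := t) (n := 2 * (p - 1) + 1) (by omega)
  obtain ⟨v, hv1, hv2, hv3, hv4⟩ := olson2 u c d (by omega)
  have hvt := hv1.trans hu
  have hvc := Finset.card_le_card hv1
  by_cases hvp : v.card ≤ p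
  · exact ⟨v, hvt.trans (h1.trans hs'), hv2, hvp, hv3, hv4⟩
  have hsd := Finset.card_sdiff_of_subset hvt
  refine ⟨t \ v, Finset.sdiff_subset.trans (h1.trans hs'), ?_, by omega, ?_, ?_⟩
  · rw [← Finset.card_pos]; omega
  · have := Finset.sum_sdiff (f := c) hvt
    rw [hc, hv3] at this; simpa using this
  · have := Finset.sum_sdiff (f := d) hvt
    rw [hd, hv4] at this; simpa using this

end NN

namespace NN

section
open scoped Pointwise

section alg
variable {K A : Type*} [Field K] [CommRing A] [Algebra K A]

lemma geom_zero {p : ℕ} {x : K} (hx : x ^ p = 1) (h1 : x ≠ 1) :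
    ∑ c ∈ Finset.range p, x ^ c = 0 := by
  have := mul_geom_sum x p
  rw [hx, sub_self] at this
  exact (mul_eq_zero.mp this).resolve_left (sub_ne_zero.mpr h1)

lemma eig {p : ℕ} (hp0 : 0 < p) (hpK : (p : K) ≠ 0) {ζ : K} (hζ : IsPrimitiveRoot ζ p)
    (T : Module.End K A) (N : Submodule K A) (hTN : ∀ f ∈ N, T f ∈ N)
    (hTp : ∀ f ∈ N, (T ^ p) f = f) (f : A) (hf : f ∈ N) :
    f ∈ Submodule.span K {w | w ∈ N ∧ ∃ c : ℕ, T w = ζ ^ c • w} := by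
  have hζ0 : ζ ≠ 0 := hζ.ne_zero hp0.ne'
  have hTi : ∀ i, (T ^ i) f ∈ N := by
    intro i
    induction i with
    | zero => simpa using hf
    | succ i ih => rw [pow_succ']; exact hTN _ ih
  let e : ℕ → A := fun c => ∑ i ∈ Finset.range p, (ζ⁻¹ ^ c) ^ i • (T ^ i) f
  have he : ∀ c, e c ∈ {w | w ∈ N ∧ ∃ c : ℕ, T w = ζ ^ c • w} := by
    intro c
    refine ⟨Submodule.sum_mem _ fun i _ => Submodule.smul_mem _ _ (hTi i), c, ?_⟩
    have h1 : T (e c) = ζ ^ c • ∑ i ∈ Finset.range p, (ζ⁻¹ ^ c) ^ (i + 1) • (T ^ (i + 1)) f := by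
      simp only [e, map_sum, map_smul, Finset.smul_sum, smul_smul]
      refine Finset.sum_congr rfl fun i _ => ?_
      rw [pow_succ' T i, Module.End.mul_apply]
      congr 1
      rw [pow_succ, mul_comm, mul_assoc, ← mul_pow, inv_mul_cancel₀ hζ0, one_pow, mul_one]
    rw [h1]
    congr 1
    have h2 := Finset.sum_range_succ (fun i => (ζ⁻¹ ^ c) ^ i • (T ^ i) f) p
    rw [Finset.sum_range_succ'] at h2
    have h3 : (ζ⁻¹ ^ c) ^ p = 1 := by
      rw [← pow_mul, mul_comm, pow_mul, inv_pow, hζ.pow_eq_one]; simp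
    rw [h3, hTp f hf] at h2
    simp only [pow_zero, Module.End.one_apply] at h2
    exact add_right_cancel h2
  have hsum : ∑ c ∈ Finset.range p, e c = (p : K) • f := by
    simp only [e]
    rw [Finset.sum_comm]
    rw [Finset.sum_eq_single 0]
    · simp [← Nat.cast_smul_eq_nsmul K]
    · intro i hi hi0
      rw [← Finset.sum_smul]
      have : ∑ c ∈ Finset.range p, (ζ⁻¹ ^ c) ^ i = 0 := by
        have := geom_zero (p := p) (x := ζ⁻¹ ^ i)
          (by rw [← pow_mul, mul_comm, pow_mul, inv_pow, hζ.pow_eq_one]; simp)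
          (hζ.inv.pow_ne_one_of_pos_of_lt hi0 (Finset.mem_range.mp hi))
        rw [← this]
        exact Finset.sum_congr rfl fun c _ => by rw [← pow_mul, ← pow_mul, mul_comm]
      rw [this, zero_smul]
    · intro h; simp at h; omega
  have : f = (p : K)⁻¹ • ∑ c ∈ Finset.range p, e c := by
    rw [hsum, smul_smul, inv_mul_cancel₀ hpK, one_smul]
  rw [this]
  exact Submodule.smul_mem _ _ (Submodule.sum_mem _ fun c _ => Submodule.subset_span (he c))

/-- The weight vectors in `N`. -/
def WV (N : Submodule K A) (ζ : K) (γ δ : A →ₐ[K] A) : Set A :=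
  {w | w ∈ N ∧ (∃ c : ℕ, γ w = ζ ^ c • w) ∧ ∃ d : ℕ, δ w = ζ ^ d • w}

lemma eig2 {p : ℕ} (hp0 : 0 < p) (hpK : (p : K) ≠ 0) {ζ : K} (hζ : IsPrimitiveRoot ζ p)
    (γ δ : A →ₐ[K] A) (N : Submodule K A) (hγN : ∀ f ∈ N, γ f ∈ N) (hδN : ∀ f ∈ N, δ f ∈ N)
    (hγp : ∀ f ∈ N, (γ.toLinearMap ^ p) f = f) (hδp : ∀ f ∈ N, (δ.toLinearMap ^ p) f = f)
    (hcomm : ∀ f ∈ N, γ (δ f) = δ (γ f)) :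
    N ≤ Submodule.span K (WV N ζ γ δ) := by
  intro f hf
  have h1 := eig hp0 hpK hζ γ.toLinearMap N hγN hγp f hf
  refine Submodule.span_le.mpr ?_ h1
  rintro w ⟨hw, c, hc⟩
  simp only [AlgHom.toLinearMap_apply] at hc
  let N' : Submodule K A :=
    { carrier := {v | v ∈ N ∧ γ v = ζ ^ c • v}
      add_mem' := by
        rintro a b ⟨ha, ha'⟩ ⟨hb, hb'⟩
        exact ⟨N.add_mem ha hb, by rw [map_add, ha', hb', smul_add]⟩
      zero_mem' := ⟨N.zero_mem, by simp⟩
      smul_mem' := by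
        rintro x a ⟨ha, ha'⟩
        exact ⟨N.smul_mem x ha, by rw [map_smul, ha', smul_comm]⟩ }
  have h2 := eig hp0 hpK hζ δ.toLinearMap N'
    (by rintro v ⟨hv, hv'⟩
        exact ⟨hδN v hv, by
          simp only [AlgHom.toLinearMap_apply]
          rw [hcomm v hv, hv', map_smul]⟩)
    (fun v hv => hδp v hv.1) w ⟨hw, hc⟩
  refine Submodule.span_mono ?_ h2
  rintro v ⟨⟨hv, hv'⟩, d, hd⟩
  exact ⟨hv, ⟨c, hv'⟩, d, hd⟩

/-- Elements of `I` fixed by `γ` and `δ`. -/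
def Mfix (I : Ideal A) (γ δ : A →ₐ[K] A) : Submodule K A :=
  { carrier := {f | f ∈ I ∧ γ f = f ∧ δ f = f}
    add_mem' := by
      rintro a b ⟨ha, ha', ha''⟩ ⟨hb, hb', hb''⟩
      exact ⟨I.add_mem ha hb, by rw [map_add, ha', hb'], by rw [map_add, ha'', hb'']⟩
    zero_mem' := ⟨I.zero_mem, by simp, by simp⟩
    smul_mem' := by
      rintro x a ⟨ha, ha', ha''⟩
      refine ⟨?_, by rw [map_smul, ha'], by rw [map_smul, ha'']⟩
      rw [Algebra.smul_def]
      exact I.mul_mem_left _ ha }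

lemma prod_weight {ι : Type*} (γ : A →ₐ[K] A) (ζ : K) (w : ι → A) (c : ι → ℕ)
    (h : ∀ i, γ (w i) = ζ ^ c i • w i) (s : Finset ι) :
    γ (∏ i ∈ s, w i) = ζ ^ (∑ i ∈ s, c i) • ∏ i ∈ s, w i := by
  rw [map_prod, ← Finset.prod_pow_eq_pow_sum, ← Finset.prod_smul]
  exact Finset.prod_congr rfl fun i _ => h i

lemma pow_eq_one_of_cast {p : ℕ} {ζ : K} (hζ : IsPrimitiveRoot ζ p) {x : ℕ}
    (h : (x : ZMod p) = 0) : ζ ^ x = 1 := by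
  rw [ZMod.natCast_eq_zero_iff] at h
  exact (hζ.pow_eq_one_iff_dvd x).mpr h

lemma prod_mem_pow {p : ℕ} [Fact p.Prime] {ζ : K} (hζ : IsPrimitiveRoot ζ p)
    (I : Ideal A) (γ δ : A →ₐ[K] A) {ι : Type*} (w : ι → A) (c d : ι → ℕ)
    (hw : ∀ i, w i ∈ I)
    (hc : ∀ i, γ (w i) = ζ ^ c i • w i) (hd : ∀ i, δ (w i) = ζ ^ d i • w i) (k : ℕ) :
    ∀ s : Finset ι, (k + 1) * p ≤ s.card → ∑ i ∈ s, (c i : ZMod p) = 0 →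
      ∑ i ∈ s, (d i : ZMod p) = 0 → ∏ i ∈ s, w i ∈ Mfix I γ δ ^ (k + 1) := by
  classical
  have hp : p.Prime := Fact.out
  have hp2 := hp.two_le
  have key : ∀ s : Finset ι, s.Nonempty → ∑ i ∈ s, (c i : ZMod p) = 0 →
      ∑ i ∈ s, (d i : ZMod p) = 0 → ∏ i ∈ s, w i ∈ Mfix I γ δ := by
    intro s hs h1 h2
    refine ⟨?_, ?_, ?_⟩
    · obtain ⟨i, hi⟩ := hs
      exact I.mem_of_dvd (Finset.dvd_prod_of_mem w hi) (hw i)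
    · rw [prod_weight γ ζ w c hc, pow_eq_one_of_cast hζ (by push_cast; exact h1), one_smul]
    · rw [prod_weight δ ζ w d hd, pow_eq_one_of_cast hζ (by push_cast; exact h2), one_smul]
  induction k with
  | zero =>
    intro s hs h1 h2
    rw [zero_add, pow_one]
    exact key s (by rw [← Finset.card_pos]; omega) h1 h2
  | succ k ih =>
    intro s hs h1 h2
    have comb : ∀ t ⊆ s, t.Nonempty → ∑ i ∈ t, (c i : ZMod p) = 0 →
        ∑ i ∈ t, (d i : ZMod p) = 0 →
        (∑ i ∈ s \ t, (c i : ZMod p) = 0 → ∑ i ∈ s \ t, (d i : ZMod p) = 0 →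
          ∏ i ∈ s \ t, w i ∈ Mfix I γ δ ^ (k + 1)) →
        ∏ i ∈ s, w i ∈ Mfix I γ δ ^ (k + 1 + 1) := by
      intro t hts hne h3 h4 h5
      rw [← Finset.prod_sdiff hts, pow_succ]
      refine Submodule.mul_mem_mul (h5 ?_ ?_) (key t hne h3 h4)
      · have := Finset.sum_sdiff (f := fun i => (c i : ZMod p)) hts
        rw [h1, h3] at this; simpa using this
      · have := Finset.sum_sdiff (f := fun i => (d i : ZMod p)) hts
        rw [h2, h4] at this; simpa using this
    rcases Nat.eq_zero_or_pos k with rfl | hk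
    · obtain ⟨u, hu, hcu⟩ := Finset.exists_subset_card_eq (s := s) (n := 2 * (p - 1) + 1)
        (by omega)
      obtain ⟨t, ht, hne, h3, h4⟩ := olson2 u (fun i => (c i : ZMod p))
        (fun i => (d i : ZMod p)) (by omega)
      refine comb t (ht.trans hu) hne h3 h4 fun h5 h6 => ?_
      rw [zero_add, pow_one]
      refine key _ ?_ h5 h6
      have := Finset.card_sdiff_of_subset (ht.trans hu)
      have := Finset.card_le_card ht
      rw [← Finset.card_pos]; omega
    · obtain ⟨t, ht, hne, htp, h3, h4⟩ := short s (fun i => (c i : ZMod p))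
        (fun i => (d i : ZMod p)) (by nlinarith [Nat.sub_lt hp.pos one_pos])
      refine comb t ht hne h3 h4 fun h5 h6 => ih _ ?_ h5 h6
      have := Finset.card_sdiff_of_subset ht
      have h7 : (k + 1 + 1) * p = (k + 1) * p + p := by ring
      omega

lemma weight_pow (γ : A →ₐ[K] A) {z : K} {w : A} (h : γ w = z • w) (i : ℕ) :
    (γ.toLinearMap ^ i) w = z ^ i • w := by
  induction i with
  | zero => simp
  | succ i ih =>
    rw [pow_succ', Module.End.mul_apply, ih, map_smul, AlgHom.toLinearMap_apply, h, smul_smul,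
      pow_succ]

/-- The main step: from `N` to the `γ, δ`-invariants. -/
lemma step {p : ℕ} [Fact p.Prime] (hpK : (p : K) ≠ 0) {ζ : K} (hζ : IsPrimitiveRoot ζ p)
    (I : Ideal A) (γ δ : A →ₐ[K] A) (N : Submodule K A) (hNI : ∀ f ∈ N, f ∈ I)
    (hγN : ∀ f ∈ N, γ f ∈ N) (hδN : ∀ f ∈ N, δ f ∈ N)
    (hγp : ∀ f ∈ N, (γ.toLinearMap ^ p) f = f) (hδp : ∀ f ∈ N, (δ.toLinearMap ^ p) f = f)
    (hcomm : ∀ f ∈ N, γ (δ f) = δ (γ f)) (k : ℕ) (f : A)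
    (hf : f ∈ N ^ ((k + 1) * p)) (hγf : γ f = f) (hδf : δ f = f) :
    f ∈ Mfix I γ δ ^ (k + 1) := by
  have hp : p.Prime := Fact.out
  let E : Module.End K A :=
    (∑ i ∈ Finset.range p, γ.toLinearMap ^ i) * (∑ j ∈ Finset.range p, δ.toLinearMap ^ j)
  have hE : ∀ (w : A) (x y : K), γ w = x • w → δ w = y • w →
      E w = ((∑ i ∈ Finset.range p, x ^ i) * (∑ j ∈ Finset.range p, y ^ j)) • w := by
    intro w x y hx hy
    simp only [E, Module.End.mul_apply, LinearMap.sum_apply, weight_pow δ hy]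
    rw [← Finset.sum_smul]
    simp only [map_smul, weight_pow γ hx, ← Finset.smul_sum, ← Finset.sum_smul]
    rw [smul_smul, mul_comm]
  have hEf : E f = ((p : K) * p) • f := by
    rw [hE f 1 1 (by simpa using hγf) (by simpa using hδf)]; simp
  have hle : N ^ ((k + 1) * p) ≤ (Mfix I γ δ ^ (k + 1)).comap E := by
    refine (pow_le_pow_left₀ bot_le (eig2 hp.pos hpK hζ γ δ N hγN hδN hγp hδp hcomm) _).trans ?_
    rw [Submodule.span_pow, Submodule.span_le]
    intro x hx
    rw [Set.mem_pow] at hx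
    obtain ⟨g, rfl⟩ := hx
    choose c hc using fun i => (g i).2.2.1
    choose d hd using fun i => (g i).2.2.2
    rw [List.prod_ofFn]
    have h1 := prod_weight γ ζ (fun i => (g i : A)) c hc Finset.univ
    have h2 := prod_weight δ ζ (fun i => (g i : A)) d hd Finset.univ
    simp only [SetLike.mem_coe, Submodule.mem_comap]
    rw [hE _ _ _ h1 h2]
    have hz : ∀ x : ℕ, (x : ZMod p) ≠ 0 → ∑ i ∈ Finset.range p, (ζ ^ x) ^ i = 0 := by
      intro x hx
      apply geom_zero
      · rw [← pow_mul, mul_comm, pow_mul, hζ.pow_eq_one, one_pow]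
      · rw [Ne, hζ.pow_eq_one_iff_dvd, ← ZMod.natCast_eq_zero_iff]; exact hx
    by_cases hc0 : ((∑ i, c i : ℕ) : ZMod p) = 0
    · by_cases hd0 : ((∑ i, d i : ℕ) : ZMod p) = 0
      · refine Submodule.smul_mem _ _ ?_
        exact prod_mem_pow hζ I γ δ (fun i => (g i : A)) c d (fun i => hNI _ (g i).2.1) hc hd k
          Finset.univ (by simp) (by push_cast at hc0; exact hc0) (by push_cast at hd0; exact hd0)
      · rw [hz _ hd0, mul_zero, zero_smul]; exact Submodule.zero_mem _
    · rw [hz _ hc0, zero_mul, zero_smul]; exact Submodule.zero_mem _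
  have h3 := hle hf
  rw [Submodule.mem_comap, hEf] at h3
  have h4 := Submodule.smul_mem _ ((p : K) * p)⁻¹ h3
  rwa [smul_smul, inv_mul_cancel₀ (mul_ne_zero hpK hpK), one_smul] at h4

/-- Elements of `I` fixed by `G`. -/
def MG {G : Type*} [Group G] (I : Ideal A) (σ : G →* (A →ₐ[K] A)) : Submodule K A :=
  { carrier := {f | f ∈ I ∧ ∀ g, σ g f = f}
    add_mem' := by
      rintro a b ⟨ha, ha'⟩ ⟨hb, hb'⟩
      exact ⟨I.add_mem ha hb, fun g => by rw [map_add, ha', hb']⟩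
    zero_mem' := ⟨I.zero_mem, by simp⟩
    smul_mem' := by
      rintro x a ⟨ha, ha'⟩
      refine ⟨?_, fun g => by rw [map_smul, ha']⟩
      rw [Algebra.smul_def]
      exact I.mul_mem_left _ ha }

/-- The transfer. -/
def tr {G : Type*} [Group G] [Fintype G] (σ : G →* (A →ₐ[K] A)) : A →ₗ[K] A :=
  ∑ g, (σ g).toLinearMap

lemma tr_apply {G : Type*} [Group G] [Fintype G] (σ : G →* (A →ₐ[K] A)) (f : A) :
    tr σ f = ∑ g, σ g f := by simp [tr, LinearMap.sum_apply]

lemma tr_inv {G : Type*} [Group G] [Fintype G] (σ : G →* (A →ₐ[K] A)) (f : A) (h : G) :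
    σ h (tr σ f) = tr σ f := by
  rw [tr_apply, map_sum]
  refine (Fintype.sum_equiv (Equiv.mulLeft h) _ _ fun g => ?_)
  simp [map_mul, AlgHom.mul_apply]

lemma tr_mul {G : Type*} [Group G] [Fintype G] (σ : G →* (A →ₐ[K] A)) (u f : A)
    (hu : ∀ g, σ g u = u) : tr σ (u * f) = u * tr σ f := by
  simp only [tr_apply, map_mul, hu, Finset.mul_sum]

lemma tr_fix {G : Type*} [Group G] [Fintype G] (σ : G →* (A →ₐ[K] A)) (u : A)
    (hu : ∀ g, σ g u = u) : tr σ u = (Fintype.card G : K) • u := by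
  simp only [tr_apply, hu]
  simp [Nat.cast_smul_eq_nsmul]

lemma tr_mem {G : Type*} [Group G] [Fintype G] (σ : G →* (A →ₐ[K] A)) (I : Ideal A)
    (hI : ∀ g, ∀ f ∈ I, σ g f ∈ I) (f : A) (hf : f ∈ I) : tr σ f ∈ MG I σ :=
  ⟨by rw [tr_apply]; exact Ideal.sum_mem _ fun g _ => hI g f hf, fun h => tr_inv σ f h⟩

lemma index_step {G : Type*} [Group G] [Fintype G] (hG : (Fintype.card G : K) ≠ 0)
    (σ : G →* (A →ₐ[K] A)) (I : Ideal A)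
    (hI : ∀ g, ∀ f ∈ I, σ g f ∈ I) (N : Submodule K A) (hNI : ∀ f ∈ N, f ∈ I)
    (n : ℕ) (t : Fin n → G) (ht : ∀ g, ∃ j, ∀ f ∈ N, σ g f = σ (t j) f)
    (f : A) (hf : f ∈ N ^ (n + 1)) (hfG : ∀ g, σ g f = f) : f ∈ MG I σ ^ 2 := by
  classical
  have hle : N ^ (n + 1) ≤ (MG I σ ^ 2).comap (tr σ) := by
    have hN : N = Submodule.span K (N : Set A) := by simp
    rw [pow_succ']
    nth_rw 2 [hN]
    rw [Submodule.span_pow, Submodule.mul_le]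
    intro h hh x hx
    suffices hs : Submodule.span K ((N : Set A) ^ n) ≤
        ((MG I σ ^ 2).comap (tr σ)).comap (LinearMap.mulLeft K h) from hs hx
    clear hx x
    rw [Submodule.span_le]
    intro x hx
    rw [Set.mem_pow] at hx
    obtain ⟨w, rfl⟩ := hx
    rw [List.prod_ofFn]
    simp only [SetLike.mem_coe, Submodule.mem_comap, LinearMap.mulLeft_apply]
    have h0 : ∀ g, σ g h * ∏ i, (σ g (w i) + - σ (t i) (w i)) = 0 := by
      intro g
      obtain ⟨j, hj⟩ := ht g
      rw [Finset.prod_eq_zero (Finset.mem_univ j), mul_zero]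
      rw [hj _ (w j).2, add_neg_cancel]
    have h1 : ∑ S ∈ (Finset.univ : Finset (Fin n)).powerset,
        tr σ (h * ∏ i ∈ S, (w i : A)) * ∏ i ∈ Finset.univ \ S, (- σ (t i) (w i)) = 0 := by
      rw [← Finset.sum_eq_zero fun g (_ : g ∈ Finset.univ) => h0 g]
      simp only [Finset.prod_add, tr_apply, Finset.sum_mul, Finset.mul_sum]
      rw [Finset.sum_comm]
      refine Finset.sum_congr rfl fun g _ => Finset.sum_congr rfl fun S _ => ?_
      rw [map_mul, map_prod]; ring
    have h2 := congrArg (tr σ) h1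
    rw [map_sum, map_zero] at h2
    simp only [tr_mul σ _ _ (tr_inv σ _)] at h2
    rw [← Finset.sum_erase_add _ _ (Finset.mem_powerset_self (Finset.univ : Finset (Fin n)))] at h2
    simp only [Finset.sdiff_self, Finset.prod_empty] at h2
    rw [tr_fix σ 1 (by simp), Algebra.mul_smul_comm, mul_one] at h2
    have h3 : (Fintype.card G : K) • tr σ (h * ∏ i, (w i : A)) ∈ MG I σ ^ 2 := by
      rw [eq_neg_of_add_eq_zero_right h2]
      refine Submodule.neg_mem _ (Submodule.sum_mem _ fun S hS => ?_)
      rw [pow_two]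
      refine Submodule.mul_mem_mul (tr_mem σ I hI _ (I.mul_mem_right _ (hNI _ hh)))
        (tr_mem σ I hI _ ?_)
      have hne : (Finset.univ \ S).Nonempty := by
        rw [Finset.mem_erase] at hS
        rw [Finset.nonempty_iff_ne_empty, Ne, Finset.sdiff_eq_empty_iff_subset]
        exact fun h => hS.1 (Finset.univ_subset_iff.mp h)
      obtain ⟨i, hi⟩ := hne
      exact I.mem_of_dvd (Finset.dvd_prod_of_mem _ hi) (I.neg_mem (hI _ _ (hNI _ (w i).2)))
    have h4 := Submodule.smul_mem _ (Fintype.card G : K)⁻¹ h3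
    rwa [smul_smul, inv_mul_cancel₀ hG, one_smul] at h4
  have h3 := hle hf
  rw [Submodule.mem_comap, tr_fix σ f hfG] at h3
  have h4 := Submodule.smul_mem _ (Fintype.card G : K)⁻¹ h3
  rwa [smul_smul, inv_mul_cancel₀ hG, one_smul] at h4

end alg
end

end NN

namespace NN

section chain

lemma pow_congr_fix {K A : Type*} [Field K] [CommRing A] [Algebra K A] (α : A →ₐ[K] A) {f : A}
    {z x y : ℕ} (hz : (α ^ z) f = f) (hxy : x ≡ y [MOD z]) : (α ^ x) f = (α ^ y) f := by
  have key : ∀ k, (α ^ (z * k)) f = f := by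
    intro k
    induction k with
    | zero => simp
    | succ k ih => rw [Nat.mul_succ, pow_add, AlgHom.mul_apply, hz, ih]
  have h2 : ∀ x, (α ^ x) f = (α ^ (x % z)) f := by
    intro x
    conv_lhs => rw [← Nat.mod_add_div x z, pow_add, AlgHom.mul_apply, key]
  rw [h2 x, h2 y, hxy]

lemma toLin_pow {K A : Type*} [Field K] [CommRing A] [Algebra K A] (α : A →ₐ[K] A) (f : A)
    (i : ℕ) : (α.toLinearMap ^ i) f = (α ^ i) f := by
  induction i with
  | zero => simp
  | succ i ih => rw [pow_succ', pow_succ', Module.End.mul_apply, ih]; rfl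

lemma comm_rel {M : Type*} [Monoid M] {α β : M} {r : ℕ} (h : β * α = α ^ r * β) (e x : ℕ) :
    β ^ e * α ^ x = α ^ (x * r ^ e) * β ^ e := by
  have h1 : ∀ x, β * α ^ x = α ^ (x * r) * β := by
    intro x
    induction x with
    | zero => simp
    | succ x ih =>
      rw [pow_succ, ← mul_assoc, ih, mul_assoc, h, ← mul_assoc, ← pow_add, Nat.succ_mul]
  induction e generalizing x with
  | zero => simp
  | succ e ih =>
    rw [pow_succ, mul_assoc, h1, ← mul_assoc, ih, mul_assoc]
    congr 2
    rw [pow_succ']; ring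

lemma unit_lemma {q r e p : ℕ} (hq : q ≠ 1) (hq0 : 0 < q) (hp : p = q.minFac) (h : (r ^ e) ^ q ≡ 1 [MOD p]) :
    r ^ e ≡ 1 [MOD p] := by
  have hpp : p.Prime := hp ▸ Nat.minFac_prime hq
  have : Fact p.Prime := ⟨hpp⟩
  rw [← ZMod.natCast_eq_natCast_iff] at h ⊢
  push_cast at h ⊢
  set u : ZMod p := (r : ZMod p) ^ e
  have hu0 : u ≠ 0 := by
    intro h0
    rw [h0, zero_pow hq0.ne'] at h
    exact zero_ne_one h
  have h2 : u ^ (p - 1) = 1 := ZMod.pow_card_sub_one_eq_one hu0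
  have hc : Nat.Coprime q (p - 1) := by
    apply Nat.Coprime.symm
    apply Nat.coprime_of_dvd
    intro k hk hk1 hk2
    have h3 := Nat.minFac_le_of_dvd hk.two_le hk2
    have h4 := Nat.le_of_dvd (by have := hpp.two_le; omega) hk1
    have := hpp.two_le
    omega
  have h3 : orderOf u ∣ 1 := hc ▸ Nat.dvd_gcd (orderOf_dvd_of_pow_eq_one h) (orderOf_dvd_of_pow_eq_one h2)
  exact orderOf_eq_one_iff.mp (Nat.dvd_one.mp h3)

variable {K : Type*} [Field K] {D : ℕ}

lemma chain {m n r : ℕ} (hm : 0 < m)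
    (hroots : ∀ p, p.Prime → p ∣ m → (p : K) ≠ 0 ∧ ∃ ζ : K, IsPrimitiveRoot ζ p)
    (α β : MvPolynomial (Fin D) K →ₐ[K] MvPolynomial (Fin D) K)
    (hα : α ^ (m * n) = 1) (hβ : β ^ m = 1) (hαβ : β * α = α ^ r * β)
    (hr : r ^ m ≡ 1 [MOD m * n])
    (I : Ideal (MvPolynomial (Fin D) K)) (hI : I = RingHom.ker (constantCoeff))
    (hIα : ∀ f ∈ I, α f ∈ I) (hIβ : ∀ f ∈ I, β f ∈ I) (q : ℕ) :
    ∀ e, e * q = m → ∀ (k d : ℕ) (f : MvPolynomial (Fin D) K), f.IsHomogeneous d →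
      (k + 1) * q ≤ d → f ∈ Mfix I (α ^ (n * e)) (β ^ e) →
      f ∈ Mfix I (α ^ (n * e)) (β ^ e) ^ (k + 1) := by
  have hIα' : ∀ i, ∀ f ∈ I, (α ^ i) f ∈ I := by
    intro i f hf
    induction i with
    | zero => simpa using hf
    | succ i ih => rw [pow_succ']; exact hIα _ ih
  have hIβ' : ∀ i, ∀ f ∈ I, (β ^ i) f ∈ I := by
    intro i f hf
    induction i with
    | zero => simpa using hf
    | succ i ih => rw [pow_succ']; exact hIβ _ ih
  induction q using Nat.strong_induction_on with
  | _ q ih =>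
  intro e he k d f hfd hkd hf
  have hq0 : 0 < q := Nat.pos_of_ne_zero (by rintro rfl; omega)
  by_cases hq : q = 1
  · subst hq
    rw [mul_one] at he
    subst he
    rw [mul_comm n, hα, hβ] at hf ⊢
    have h1 : homogeneousSubmodule (Fin D) K 1 ≤ Mfix I 1 1 := by
      intro g hg
      refine ⟨?_, rfl, rfl⟩
      rw [hI, RingHom.mem_ker, constantCoeff_eq]
      exact IsHomogeneous.coeff_eq_zero hg (by simp)
    have h2 : f ∈ (homogeneousSubmodule (Fin D) K 1) ^ d := by
      rw [homogeneousSubmodule_one_pow]; exact hfd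
    obtain ⟨j, rfl⟩ : ∃ j, d = k + (j + 1) := ⟨d - k - 1, by omega⟩
    rw [pow_add] at h2
    have h3 : (homogeneousSubmodule (Fin D) K 1) ^ (j + 1) ≤ Mfix I 1 1 := by
      rw [homogeneousSubmodule_one_pow]
      intro g hg
      refine ⟨?_, rfl, rfl⟩
      rw [hI, RingHom.mem_ker, constantCoeff_eq]
      exact IsHomogeneous.coeff_eq_zero hg (by simp)
    rw [pow_succ]
    exact mul_le_mul' (pow_le_pow_left₀ bot_le h1 k) h3 h2
  · have hp : q.minFac.Prime := Nat.minFac_prime hq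
    obtain ⟨q', hq'⟩ := Nat.minFac_dvd q
    set p := q.minFac with hpdef
    have : Fact p.Prime := ⟨hp⟩
    have hpm : p ∣ m := (Nat.minFac_dvd q).trans ⟨e, by rw [← he, mul_comm]⟩
    obtain ⟨hpK, ζ, hζ⟩ := hroots p hp hpm
    have hlt : q' < q := by
      have := hp.two_le
      have : 0 < q' := Nat.pos_of_ne_zero (by rintro rfl; omega)
      nlinarith
    have hep : e * p * q' = m := by rw [mul_assoc, ← hq', he]
    have hre : r ^ e ≡ 1 [MOD p] := by
      apply unit_lemma hq hq0 hpdef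
      rw [← pow_mul, he]
      exact hr.of_dvd (hpm.mul_right n)
    have hcong : n * e * r ^ e ≡ n * e [MOD n * (e * p)] := by
      rw [← mul_assoc]
      simpa using Nat.ModEq.mul_left' (n * e) hre
    have hcong2 : n * e * r ^ (e * p) ≡ n * e [MOD n * (e * p)] := by
      rw [← mul_assoc]
      have := (hre.pow p)
      rw [one_pow, ← pow_mul] at this
      simpa using Nat.ModEq.mul_left' (n * e) this
    set N := Mfix I (α ^ (n * (e * p))) (β ^ (e * p)) with hN
    have hγN : ∀ f ∈ N, (α ^ (n * e)) f ∈ N := by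
      rintro f ⟨h1, h2, h3⟩
      refine ⟨hIα' _ _ h1, ?_, ?_⟩
      · rw [← AlgHom.mul_apply, ← pow_add, add_comm, pow_add, AlgHom.mul_apply, h2]
      · rw [← AlgHom.mul_apply, comm_rel hαβ, AlgHom.mul_apply, h3]
        exact pow_congr_fix α h2 hcong2
    have hδN : ∀ f ∈ N, (β ^ e) f ∈ N := by
      rintro f ⟨h1, h2, h3⟩
      refine ⟨hIβ' _ _ h1, ?_, ?_⟩
      · have h4 : (α ^ (n * (e * p) * r ^ (e * (q - 1)))) f = f := by
          have := pow_congr_fix α h2 (x := n * (e * p) * r ^ (e * (q - 1))) (y := 0)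
            ((Nat.modEq_zero_iff_dvd).mpr ⟨_, rfl⟩)
          simpa using this
        conv_rhs => rw [← h4, ← AlgHom.mul_apply, comm_rel hαβ, AlgHom.mul_apply]
        have h5 : n * (e * p) * r ^ (e * (q - 1)) * r ^ e ≡ n * (e * p) [MOD m * n] := by
          have : e * (q - 1) + e = m := by
            rw [← he, ← Nat.mul_succ]; congr 1; omega
          rw [mul_assoc, ← pow_add, this]
          simpa using hr.mul_left (n * (e * p))
        exact (pow_congr_fix α (by rw [hα]; rfl) h5).symm
      · rw [← AlgHom.mul_apply, ← pow_add, add_comm, pow_add, AlgHom.mul_apply, h3]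
    have hMN : f ∈ N := by
      obtain ⟨h1, h2, h3⟩ := hf
      refine ⟨h1, ?_, ?_⟩
      · have := pow_congr_fix α h2 (x := n * (e * p)) (y := 0)
          ((Nat.modEq_zero_iff_dvd).mpr ⟨p, by ring⟩)
        simpa using this
      · have := pow_congr_fix β h3 (x := e * p) (y := 0)
          ((Nat.modEq_zero_iff_dvd).mpr ⟨p, by ring⟩)
        simpa using this
    have hpos : (k + 1) * p - 1 + 1 = (k + 1) * p :=
      Nat.sub_add_cancel (Nat.mul_pos (Nat.succ_pos k) hp.pos)
    have h1 := ih q' hlt (e * p) hep ((k + 1) * p - 1) d f hfd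
      (by rw [hpos, mul_assoc, ← hq']; exact hkd) hMN
    rw [hpos] at h1
    refine step hpK hζ I _ _ N (fun f hf => hf.1) hγN hδN ?_ ?_ ?_ k f h1 hf.2.1 hf.2.2
    · rintro f ⟨-, h2, -⟩
      rw [toLin_pow, ← pow_mul, mul_assoc]; exact h2
    · rintro f ⟨-, -, h3⟩
      rw [toLin_pow, ← pow_mul]; exact h3
    · intro f hf
      rw [← AlgHom.mul_apply (β ^ e), comm_rel hαβ, AlgHom.mul_apply]
      exact (pow_congr_fix α (hδN f hf).2.1 hcong).symm

end chain
end NN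

namespace NN

section grp
variable {m n : ℕ} (φ : Multiplicative (ZMod m) →* MulAut (Multiplicative (ZMod (m * n))))

/-- generator of the normal factor -/
def ga : Multiplicative (ZMod (m * n)) ⋊[φ] Multiplicative (ZMod m) :=
  SemidirectProduct.inl (Multiplicative.ofAdd 1)

/-- generator of the complement -/
def gb : Multiplicative (ZMod (m * n)) ⋊[φ] Multiplicative (ZMod m) :=
  SemidirectProduct.inr (Multiplicative.ofAdd 1)

/-- the multiplier of the action -/
def gr : ℕ := (Multiplicative.toAdd (φ (Multiplicative.ofAdd 1) (Multiplicative.ofAdd 1))).val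

lemma ofAdd_one_pow {k : ℕ} (i : ℕ) :
    (Multiplicative.ofAdd (1 : ZMod k)) ^ i = Multiplicative.ofAdd (i : ZMod k) := by
  rw [← ofAdd_nsmul]; simp

lemma ga_pow (i : ℕ) : ga φ ^ i = SemidirectProduct.inl (Multiplicative.ofAdd (i : ZMod (m * n))) := by
  rw [ga, ← map_pow, ofAdd_one_pow]

lemma gb_pow (i : ℕ) : gb φ ^ i = SemidirectProduct.inr (Multiplicative.ofAdd (i : ZMod m)) := by
  rw [gb, ← map_pow, ofAdd_one_pow]

lemma ga_card : ga φ ^ (m * n) = 1 := by rw [ga_pow]; simp [-Nat.cast_mul]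

lemma gb_card : gb φ ^ m = 1 := by rw [gb_pow]; simp

lemma phi_one [NeZero (m * n)] (x : Multiplicative (ZMod (m * n))) :
    φ (Multiplicative.ofAdd 1) x = x ^ gr φ := by
  have h : x = (Multiplicative.ofAdd 1) ^ (Multiplicative.toAdd x).val := by
    rw [ofAdd_one_pow]; simp
  have h1 : φ (Multiplicative.ofAdd 1) (Multiplicative.ofAdd 1) =
      (Multiplicative.ofAdd 1) ^ gr φ := by
    rw [ofAdd_one_pow, gr]; simp
  conv_lhs => rw [h, map_pow, h1, ← pow_mul]
  conv_rhs => rw [h, ← pow_mul]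
  rw [mul_comm (gr φ)]

lemma phi_nat [NeZero (m * n)] (j : ℕ) (x : Multiplicative (ZMod (m * n))) :
    φ (Multiplicative.ofAdd (j : ZMod m)) x = x ^ (gr φ ^ j) := by
  rw [← ofAdd_one_pow, map_pow]
  induction j with
  | zero => simp
  | succ j ih => rw [pow_succ', MulAut.mul_apply, ih, phi_one, ← pow_mul, pow_succ]

lemma gr_pow [NeZero (m * n)] : gr φ ^ m ≡ 1 [MOD m * n] := by
  have h := phi_nat φ m (Multiplicative.ofAdd 1)
  rw [ofAdd_one_pow] at h
  simp only [CharP.cast_eq_zero, ofAdd_zero, map_one, MulAut.one_apply] at h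
  rw [← ZMod.natCast_eq_natCast_iff]
  simpa using (Multiplicative.ofAdd.injective h).symm

lemma gba [NeZero (m * n)] : gb φ * ga φ = ga φ ^ gr φ * gb φ := by
  have h := SemidirectProduct.inl_aut (φ := φ) (Multiplicative.ofAdd 1) (Multiplicative.ofAdd 1)
  rw [phi_one, map_pow] at h
  rw [ga, gb, h, map_inv, inv_mul_cancel_right]

lemma gform [NeZero (m * n)] [NeZero m]
    (g : Multiplicative (ZMod (m * n)) ⋊[φ] Multiplicative (ZMod m)) :
    ∃ i j : ℕ, g = ga φ ^ i * gb φ ^ j := by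
  refine ⟨(Multiplicative.toAdd g.left).val, (Multiplicative.toAdd g.right).val, ?_⟩
  rw [ga_pow, gb_pow]
  simp

end grp

section rep
variable {F : Type*} [Field F] {G : Type*} [Group G] {d : ℕ}

/-- the action on polynomials as a monoid hom -/
noncomputable def sig (ρ : G →* Matrix.GeneralLinearGroup (Fin d) F) :
    G →* (MvPolynomial (Fin d) F →ₐ[F] MvPolynomial (Fin d) F) where
  toFun g := aeval (fun i => ∑ j, ((ρ g⁻¹).val i j) • (X j))
  map_one' := by
    apply MvPolynomial.algHom_ext
    intro i
    simp [Matrix.one_apply]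
  map_mul' g h := by
    apply MvPolynomial.algHom_ext
    intro i
    simp only [AlgHom.mul_apply, aeval_X, mul_inv_rev, map_mul, Units.val_mul, Matrix.mul_apply,
      map_sum, map_smul, Finset.smul_sum, Finset.sum_smul, smul_smul]
    rw [Finset.sum_comm]

lemma sig_apply (ρ : G →* Matrix.GeneralLinearGroup (Fin d) F) (g : G) (f) :
    sig ρ g f = polyAct ρ g⁻¹ f := rfl

lemma inv_iff (ρ : G →* Matrix.GeneralLinearGroup (Fin d) F) (f) :
    IsPolyInvariant ρ f ↔ ∀ g, sig ρ g f = f := by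
  constructor
  · intro h g; exact h g⁻¹
  · intro h g; have := h g⁻¹; rwa [sig_apply, inv_inv] at this

lemma sig_hom (ρ : G →* Matrix.GeneralLinearGroup (Fin d) F) (g : G) {f} {k : ℕ}
    (hf : f.IsHomogeneous k) : (sig ρ g f).IsHomogeneous k := by
  have := hf.aeval (n := 1) (fun i => ∑ j, ((ρ g⁻¹).val i j) • (X j : MvPolynomial (Fin d) F)) ?_
  · rw [one_mul] at this; exact this
  · intro i
    apply IsHomogeneous.sum
    intro j _
    rw [smul_eq_C_mul]
    simpa using (isHomogeneous_C (Fin d) ((ρ g⁻¹).val i j)).mul (isHomogeneous_X F j)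

lemma sig_comp (ρ : G →* Matrix.GeneralLinearGroup (Fin d) F) (g : G) (f) (k : ℕ) :
    homogeneousComponent k (sig ρ g f) = sig ρ g (homogeneousComponent k f) := by
  conv_lhs => rw [← sum_homogeneousComponent f, map_sum, map_sum]
  by_cases hk : k < f.totalDegree + 1
  · rw [Finset.sum_eq_single k]
    · exact homogeneousComponent_eq_self (sig_hom ρ g (homogeneousComponent_isHomogeneous _ _))
    · intro i _ hi
      rw [homogeneousComponent_of_mem (sig_hom ρ g (homogeneousComponent_isHomogeneous i f)),
        if_neg hi.symm]
    · intro h; exact absurd (Finset.mem_range.mpr hk) h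
  · rw [homogeneousComponent_eq_zero k f (by omega), map_zero]
    refine Finset.sum_eq_zero fun i hi => ?_
    rw [homogeneousComponent_of_mem (sig_hom ρ g (homogeneousComponent_isHomogeneous i f)),
        if_neg]
    rintro rfl
    exact hk (Finset.mem_range.mp hi)

/-- augmentation ideal -/
noncomputable def aug (F : Type*) [Field F] (d : ℕ) : Ideal (MvPolynomial (Fin d) F) :=
  RingHom.ker (constantCoeff)

lemma mem_aug {f : MvPolynomial (Fin d) F} : f ∈ aug F d ↔ homogeneousComponent 0 f = 0 := by
  rw [aug, RingHom.mem_ker, homogeneousComponent_zero, constantCoeff_eq]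
  simp

lemma sig_aug (ρ : G →* Matrix.GeneralLinearGroup (Fin d) F) (g : G) (f) (hf : f ∈ aug F d) :
    sig ρ g f ∈ aug F d := by
  rw [mem_aug] at hf ⊢
  rw [sig_comp, hf, map_zero]

lemma noether_of (ρ : G →* Matrix.GeneralLinearGroup (Fin d) F) (s : ℕ)
    (h : ∀ k > s, ∀ f : MvPolynomial (Fin d) F, f.IsHomogeneous k → f ∈ MG (aug F d) (sig ρ) →
      f ∈ MG (aug F d) (sig ρ) ^ 2) : NoetherBoundLe ρ s := by
  set S := Algebra.adjoin F
      {h : MvPolynomial (Fin d) F | IsPolyInvariant ρ h ∧ h.totalDegree ≤ s} with hS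
  have key : ∀ k, ∀ f : MvPolynomial (Fin d) F, f.IsHomogeneous k → (∀ g, sig ρ g f = f) →
      f ∈ S := by
    intro k
    induction k using Nat.strong_induction_on with
    | _ k ih =>
    intro f hf hinv
    by_cases hk : k ≤ s
    · exact Algebra.subset_adjoin ⟨(inv_iff ρ f).mpr hinv, hf.totalDegree_le.trans hk⟩
    have hf0 : f ∈ aug F d := by
      rw [mem_aug, homogeneousComponent_of_mem hf, if_neg (by omega)]
    have h2 := h k (by omega) f hf ⟨hf0, hinv⟩
    have hle : MG (aug F d) (sig ρ) ^ 2 ≤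
        (Subalgebra.toSubmodule S).comap (homogeneousComponent k) := by
      rw [pow_two, Submodule.mul_le]
      rintro u ⟨hu, hu'⟩ v ⟨hv, hv'⟩
      rw [Submodule.mem_comap, ← sum_homogeneousComponent u, ← sum_homogeneousComponent v,
        Finset.sum_mul_sum, map_sum]
      refine Submodule.sum_mem _ fun i _ => ?_
      rw [map_sum]
      refine Submodule.sum_mem _ fun j _ => ?_
      rw [homogeneousComponent_of_mem ((homogeneousComponent_isHomogeneous i u).mul
        (homogeneousComponent_isHomogeneous j v))]
      split_ifs with hij
      · rcases Nat.eq_zero_or_pos i with rfl | hi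
        · rw [mem_aug.mp hu, zero_mul]; exact Submodule.zero_mem _
        rcases Nat.eq_zero_or_pos j with rfl | hj
        · rw [mem_aug.mp hv, mul_zero]; exact Submodule.zero_mem _
        rw [Subalgebra.mem_toSubmodule]
        refine S.mul_mem (ih i (by omega) _ (homogeneousComponent_isHomogeneous i u) ?_)
          (ih j (by omega) _ (homogeneousComponent_isHomogeneous j v) ?_)
        · intro g; rw [← sig_comp, hu']
        · intro g; rw [← sig_comp, hv']
      · exact Submodule.zero_mem _
    have h3 := hle h2
    rw [Submodule.mem_comap, homogeneousComponent_eq_self hf] at h3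
    exact h3
  intro f hf
  rw [inv_iff] at hf
  rw [← sum_homogeneousComponent f]
  refine Subalgebra.sum_mem _ fun i _ => key i _ (homogeneousComponent_isHomogeneous i f) ?_
  intro g; rw [← sig_comp, hf]

variable {K : Type*} [Field K] [Algebra F K]

/-- base change of a representation -/
noncomputable def bc (K : Type*) [Field K] [Algebra F K]
    (ρ : G →* Matrix.GeneralLinearGroup (Fin d) F) :
    G →* Matrix.GeneralLinearGroup (Fin d) K :=
  (Matrix.GeneralLinearGroup.map (algebraMap F K)).comp ρ

lemma sig_bc (ρ : G →* Matrix.GeneralLinearGroup (Fin d) F) (g : G) (f) :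
    sig (bc K ρ) g (map (algebraMap F K) f) = map (algebraMap F K) (sig ρ g f) := by
  induction f using MvPolynomial.induction_on with
  | C a => simp [sig]
  | add p q hp hq => rw [map_add, map_add, hp, hq, map_add, map_add]
  | mul_X p i hp =>
    rw [map_mul, map_mul, hp, map_mul, map_mul]
    congr 1
    simp only [sig, bc, MonoidHom.coe_mk, OneHom.coe_mk, map_X, aeval_X, map_sum, smul_eq_C_mul,
      map_mul, map_C]
    rfl

lemma mem_of_span (W : Submodule F (MvPolynomial (Fin d) F)) (f : MvPolynomial (Fin d) F)
    (hf : map (algebraMap F K) f ∈ Submodule.span K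
      ((fun w => map (algebraMap F K) w) '' (W : Set (MvPolynomial (Fin d) F)))) : f ∈ W := by
  by_contra hn
  obtain ⟨l, hl, hW⟩ := Submodule.exists_le_ker_of_notMem hn
  let lK : MvPolynomial (Fin d) K →ₗ[K] K :=
    (basisMonomials (Fin d) K).constr K (fun s => algebraMap F K (l (monomial s 1)))
  have hlK : ∀ w, lK (map (algebraMap F K) w) = algebraMap F K (l w) := by
    intro w
    induction w using MvPolynomial.induction_on' with
    | monomial s a =>
      rw [map_monomial]
      have h1 : monomial s (algebraMap F K a) = algebraMap F K a • basisMonomials (Fin d) K s := by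
        rw [coe_basisMonomials, smul_monomial, smul_eq_mul, mul_one]
      have h2 : monomial s a = a • (monomial s 1 : MvPolynomial (Fin d) F) := by
        simp [smul_monomial]
      rw [h1, map_smul, Module.Basis.constr_basis, h2, map_smul]
      simp
    | add p q hp hq => rw [map_add, map_add, hp, hq, map_add, map_add]
  have : Submodule.span K ((fun w => map (algebraMap F K) w) ''
      (W : Set (MvPolynomial (Fin d) F))) ≤ LinearMap.ker lK := by
    rw [Submodule.span_le]
    rintro _ ⟨w, hw, rfl⟩
    have := hW hw
    rw [LinearMap.mem_ker] at this
    simp [hlK, this]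
  have h3 := this hf
  rw [LinearMap.mem_ker, hlK] at h3
  exact hl (by simpa using h3)

lemma MG_bc [Fintype G] (hG : (Fintype.card G : K) ≠ 0)
    (ρ : G →* Matrix.GeneralLinearGroup (Fin d) F) :
    MG (aug K d) (sig (bc K ρ)) ≤ Submodule.span K
      ((fun w => map (algebraMap F K) w) '' (MG (aug F d) (sig ρ) : Set (MvPolynomial (Fin d) F))) := by
  rintro u ⟨hu, hinv⟩
  have h1 : u = (Fintype.card G : K)⁻¹ • tr (sig (bc K ρ)) u := by
    rw [tr_fix _ _ hinv, smul_smul, inv_mul_cancel₀ hG, one_smul]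
  rw [h1]
  refine Submodule.smul_mem _ _ ?_
  rw [u.as_sum, map_sum]
  refine Submodule.sum_mem _ fun s hs => ?_
  have h2 : monomial s (coeff s u) = coeff s u • map (algebraMap F K) (monomial s 1) := by
    simp [smul_monomial]
  rw [h2, map_smul]
  refine Submodule.smul_mem _ _ (Submodule.subset_span ⟨tr (sig ρ) (monomial s 1), ?_, ?_⟩)
  · refine tr_mem _ _ (sig_aug ρ) _ ?_
    rw [aug, RingHom.mem_ker, constantCoeff_eq, coeff_monomial, if_neg]
    rintro rfl
    rw [aug, RingHom.mem_ker, constantCoeff_eq] at hu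
    exact (mem_support_iff.mp hs) hu
  · simp only [tr_apply, map_sum, sig_bc]

lemma descent [Fintype G] (hG : (Fintype.card G : K) ≠ 0)
    (ρ : G →* Matrix.GeneralLinearGroup (Fin d) F) (f : MvPolynomial (Fin d) F)
    (hf : map (algebraMap F K) f ∈ MG (aug K d) (sig (bc K ρ)) ^ 2) :
    f ∈ MG (aug F d) (sig ρ) ^ 2 := by
  apply mem_of_span (K := K)
  refine (?_ : MG (aug K d) (sig (bc K ρ)) ^ 2 ≤ _) hf
  refine (pow_le_pow_left₀ bot_le (MG_bc hG ρ) 2).trans ?_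
  rw [pow_two, Submodule.span_mul_span]
  apply Submodule.span_mono
  rintro _ ⟨_, ⟨u, hu, rfl⟩, _, ⟨v, hv, rfl⟩, rfl⟩
  refine ⟨u * v, ?_, by simp⟩
  rw [pow_two]
  exact Submodule.mul_mem_mul hu hv

end rep

lemma cast_ne_of_dvd {K : Type*} [Field K] {a b : ℕ} (h : a ∣ b) (hb : (b : K) ≠ 0) :
    (a : K) ≠ 0 := by
  rintro h0
  obtain ⟨c, rfl⟩ := h
  exact hb (by rw [Nat.cast_mul, h0, zero_mul])

theorem upper (m n : ℕ) (hm : 0 < m) (hn : 0 < n)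
    (φ : Multiplicative (ZMod m) →* MulAut (Multiplicative (ZMod (m * n))))
    (F : Type*) [Field F] (hF : ¬ (ringChar F ∣ m ^ 2 * n))
    (d : ℕ) (ρ : (Multiplicative (ZMod (m * n)) ⋊[φ] Multiplicative (ZMod m)) →*
        Matrix.GeneralLinearGroup (Fin d) F) :
      NoetherBoundLe ρ (m * n + m - 1) := by
  have : NeZero m := ⟨hm.ne'⟩
  have hmn : 0 < m * n := Nat.mul_pos hm hn
  have : NeZero (m * n) := ⟨hmn.ne'⟩
  let K := AlgebraicClosure F
  have hc : ((m ^ 2 * n : ℕ) : K) ≠ 0 := by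
    intro h
    have h1 : algebraMap F K ((m ^ 2 * n : ℕ) : F) = 0 := by rw [map_natCast]; exact h
    rw [map_eq_zero] at h1
    exact hF ((ringChar.spec F _).mp h1)
  let e := SemidirectProduct.equivProd (φ := φ)
  have : Finite (Multiplicative (ZMod (m * n)) ⋊[φ] Multiplicative (ZMod m)) :=
    Finite.of_equiv _ e.symm
  have : Fintype (Multiplicative (ZMod (m * n)) ⋊[φ] Multiplicative (ZMod m)) :=
    Fintype.ofFinite _
  have hG : (Fintype.card (Multiplicative (ZMod (m * n)) ⋊[φ] Multiplicative (ZMod m)) : K) ≠ 0 := by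
    rw [← Nat.card_eq_fintype_card, SemidirectProduct.card]
    simp only [Nat.card_eq_fintype_card, Fintype.card_multiplicative, ZMod.card]
    convert hc using 2
    ring
  apply noether_of
  intro k hk f hf hfG
  apply descent (K := K) hG
  set σ := sig (bc K ρ) with hσ
  have hfG' : ∀ g, σ g (map (algebraMap F K) f) = map (algebraMap F K) f := by
    intro g; rw [hσ, sig_bc, hfG.2]
  have hfaug : map (algebraMap F K) f ∈ aug K d := by
    have := hfG.1
    rw [aug, RingHom.mem_ker] at this ⊢
    rw [constantCoeff_map, this, map_zero]
  have hM : map (algebraMap F K) f ∈ Mfix (aug K d) (σ (ga φ) ^ (n * 1)) (σ (gb φ) ^ 1) := by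
    refine ⟨hfaug, ?_, ?_⟩
    · rw [← map_pow]; exact hfG' _
    · rw [← map_pow]; exact hfG' _
  have h1 := chain (K := K) (D := d) (m := m) (n := n) (r := gr φ) hm ?_ (σ (ga φ)) (σ (gb φ))
    (by rw [← map_pow, ga_card, map_one]) (by rw [← map_pow, gb_card, map_one])
    (by rw [← map_mul, gba, map_mul, map_pow]) (gr_pow φ) (aug K d) rfl
    (fun f hf => sig_aug _ _ f hf) (fun f hf => sig_aug _ _ f hf) m 1 (one_mul m) n k
    (map (algebraMap F K) f) (hf.map _) (by
      have : (n + 1) * m = m * n + m := by ring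
      omega) hM
  · refine index_step hG σ (aug K d) (sig_aug _)
      (Mfix (aug K d) (σ (ga φ) ^ (n * 1)) (σ (gb φ) ^ 1)) (fun f hf => hf.1) n
      (fun j => ga φ ^ (j : ℕ)) ?_ _ h1 hfG'
    intro g
    obtain ⟨i, j, rfl⟩ := gform φ g
    refine ⟨⟨i % n, Nat.mod_lt _ hn⟩, ?_⟩
    rintro u ⟨-, hu1, hu2⟩
    rw [map_mul, AlgHom.mul_apply, map_pow, map_pow, map_pow]
    rw [pow_one] at hu2
    rw [mul_one] at hu1
    have h4 : (σ (gb φ) ^ j) u = u := by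
      have := pow_congr_fix (σ (gb φ)) (z := 1) (x := j) (y := 0) (by simpa using hu2)
        (Nat.modEq_one)
      simpa using this
    rw [h4]
    exact pow_congr_fix _ hu1 (Nat.mod_modEq i n).symm
  · intro p hp hpm
    have hpK : (p : K) ≠ 0 :=
      cast_ne_of_dvd ((hpm.trans (Dvd.intro_left (m ^ 1) (by ring))).mul_right n) hc
    refine ⟨hpK, ?_⟩
    have : NeZero (p : K) := ⟨hpK⟩
    exact HasEnoughRootsOfUnity.exists_primitiveRoot K p

end NN

namespace NN

section perm
variable {F : Type*} [Field F] {G : Type*} [Group G] [Fintype G]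

/-- enumeration of two copies of `G` -/
noncomputable def enum (G : Type*) [Fintype G] : G × Fin 2 ≃ Fin (Fintype.card (G × Fin 2)) :=
  Fintype.equivFin _

/-- translation on indices -/
noncomputable def trans (g : G) (i : Fin (Fintype.card (G × Fin 2))) :
    Fin (Fintype.card (G × Fin 2)) :=
  enum G (g⁻¹ * ((enum G).symm i).1, ((enum G).symm i).2)

/-- permutation representation on two copies of `G` -/
noncomputable def prep (F : Type*) [Field F] (G : Type*) [Group G] [Fintype G] :
    G →* Matrix.GeneralLinearGroup (Fin (Fintype.card (G × Fin 2))) F :=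
  MonoidHom.toHomUnits
    { toFun := fun g => Matrix.of fun i j => if j = trans g i then (1 : F) else 0
      map_one' := by
        ext i j
        simp [trans, Matrix.one_apply, eq_comm]
      map_mul' := fun g h => by
        ext i j
        simp only [Matrix.mul_apply, Matrix.of_apply, ite_mul, one_mul, zero_mul]
        rw [Finset.sum_ite_eq' Finset.univ (trans g i), if_pos (Finset.mem_univ _)]
        simp [trans, mul_assoc] }

lemma prep_X (g h : G) (t : Fin 2) :
    polyAct (prep F G) g (X (enum G (h, t))) = X (enum G (g⁻¹ * h, t)) := by
  simp [polyAct, prep, trans]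

end perm

section scale
variable {K : Type*} [Field K]

/-- scaling the two variables -/
noncomputable def scale (s : Fin 2 → K) : MvPolynomial (Fin 2) K →ₐ[K] MvPolynomial (Fin 2) K :=
  aeval fun i => C (s i) * X i

lemma coeff_scale (s : Fin 2 → K) (P : MvPolynomial (Fin 2) K) (e : Fin 2 →₀ ℕ) :
    coeff e (scale s P) = s 0 ^ e 0 * s 1 ^ e 1 * coeff e P := by
  induction P using MvPolynomial.induction_on' with
  | monomial u a =>
    have : scale s (monomial u a) = monomial u (s 0 ^ u 0 * s 1 ^ u 1 * a) := by
      rw [scale, aeval_monomial, Finsupp.prod_fintype _ _ (by simp), monomial_eq (a := _ * a),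
        Finsupp.prod_fintype _ _ (by simp)]
      simp only [Fin.prod_univ_two, algebraMap_eq, mul_pow, map_mul, map_pow]
      ring
    rw [this, coeff_monomial, coeff_monomial]
    split_ifs with h
    · rw [h]
    · simp
  | add p q hp hq => rw [map_add, coeff_add, hp, hq, coeff_add]; ring

/-- The obstruction subalgebra. -/
def obs (F K : Type*) [Field F] [Field K] [Algebra F K] (M m : ℕ) (hM : 0 < M) (hm : 0 < m) :
    Subalgebra F (MvPolynomial (Fin 2) K) where
  carrier := {P | ∀ e, coeff e P ≠ 0 →
    M ∣ e 0 ∧ (e 0 = 0 → m ∣ e 1) ∧ ¬ (e 0 = M ∧ e 1 = m - 1)}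
  add_mem' := by
    intro P Q hP hQ e he
    by_cases h : coeff e P = 0
    · exact hQ e (by rwa [coeff_add, h, zero_add] at he)
    · exact hP e h
  mul_mem' := by
    intro P Q hP hQ e he
    rw [coeff_mul] at he
    obtain ⟨⟨u, v⟩, huv, hne⟩ := Finset.exists_ne_zero_of_sum_ne_zero he
    rw [Finset.HasAntidiagonal.mem_antidiagonal] at huv
    obtain ⟨h1, h2, h3⟩ := hP u (left_ne_zero_of_mul hne)
    obtain ⟨h4, h5, h6⟩ := hQ v (right_ne_zero_of_mul hne)
    have e0 : e 0 = u 0 + v 0 := by rw [← huv]; rfl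
    have e1 : e 1 = u 1 + v 1 := by rw [← huv]; rfl
    rw [e0, e1]
    refine ⟨dvd_add h1 h4, fun h => dvd_add (h2 (by omega)) (h5 (by omega)), ?_⟩
    rintro ⟨h7, h8⟩
    have small : ∀ x : ℕ, m ∣ x → x ≤ m - 1 → x = 0 := fun x hx hx' =>
      Nat.eq_zero_of_dvd_of_lt hx (by omega)
    rcases Nat.eq_zero_or_pos (u 0) with hu | hu
    · have := small _ (h2 hu) (by omega)
      exact h6 ⟨by omega, by omega⟩
    · have hu' := Nat.le_of_dvd hu h1
      have hv : v 0 = 0 := by omega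
      have := small _ (h5 hv) (by omega)
      exact h3 ⟨by omega, by omega⟩
  algebraMap_mem' := by
    intro r e he
    have : e = 0 := by
      by_contra h
      apply he
      rw [IsScalarTower.algebraMap_apply F K, algebraMap_eq, coeff_C, if_neg (Ne.symm h)]
    subst this
    simp
    omega

end scale

lemma hom_CX {K : Type*} [Field K] (c : K) (i : Fin 2) :
    (C c * X i : MvPolynomial (Fin 2) K).IsHomogeneous 1 := by
  have h := (isHomogeneous_C (Fin 2) c).mul (isHomogeneous_X K i)
  rwa [zero_add] at h

lemma pow_val {K : Type*} [Monoid K] {N : ℕ} {ζ : K} (hζ : ζ ^ N = 1) (z : ZMod N) [NeZero N] :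
    ζ ^ (1 + z).val = ζ * ζ ^ z.val := by
  have h : (1 + z) = ((1 + z.val : ℕ) : ZMod N) := by simp
  rw [h, ZMod.val_natCast, ← pow_eq_pow_mod _ hζ, pow_add, pow_one]

/-- the group -/
abbrev Gp {m n : ℕ} (φ : Multiplicative (ZMod m) →* MulAut (Multiplicative (ZMod (m * n)))) :=
  Multiplicative (ZMod (m * n)) ⋊[φ] Multiplicative (ZMod m)

set_option maxHeartbeats 1000000 in
theorem lower (m n : ℕ) (hm : 0 < m) (hn : 0 < n)
    (φ : Multiplicative (ZMod m) →* MulAut (Multiplicative (ZMod (m * n))))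
    (F : Type*) [Field F] (hF : ¬ (ringChar F ∣ m ^ 2 * n)) :
    ∃ (d : ℕ) (ρ : (Multiplicative (ZMod (m * n)) ⋊[φ] Multiplicative (ZMod m)) →*
        Matrix.GeneralLinearGroup (Fin d) F),
      ¬ NoetherBoundLe ρ (m * n + m - 2) := by
  classical
  have : NeZero m := ⟨hm.ne'⟩
  have hmn : 0 < m * n := Nat.mul_pos hm hn
  have : NeZero (m * n) := ⟨hmn.ne'⟩
  obtain ⟨K, _, _, hc, ζ, ω, hζ, hω⟩ : ∃ (K : Type _) (_ : Field K) (_ : Algebra F K),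
      ((m * n : ℕ) : K) ≠ 0 ∧ ∃ ζ ω : K, IsPrimitiveRoot ζ (m * n) ∧ IsPrimitiveRoot ω m := by
    have hc : ((m ^ 2 * n : ℕ) : AlgebraicClosure F) ≠ 0 := by
      intro h
      have h1 : algebraMap F (AlgebraicClosure F) ((m ^ 2 * n : ℕ) : F) = 0 := by
        rw [map_natCast]; exact h
      rw [map_eq_zero] at h1
      exact hF ((ringChar.spec F _).mp h1)
    have h1 : ((m * n : ℕ) : AlgebraicClosure F) ≠ 0 :=
      cast_ne_of_dvd (Dvd.intro m (by ring)) hc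
    have h2 : ((m : ℕ) : AlgebraicClosure F) ≠ 0 := cast_ne_of_dvd (Dvd.intro n rfl) h1
    have : NeZero ((m * n : ℕ) : AlgebraicClosure F) := ⟨h1⟩
    have : NeZero ((m : ℕ) : AlgebraicClosure F) := ⟨h2⟩
    obtain ⟨ζ, hζ⟩ := HasEnoughRootsOfUnity.exists_primitiveRoot (AlgebraicClosure F) (m * n)
    obtain ⟨ω, hω⟩ := HasEnoughRootsOfUnity.exists_primitiveRoot (AlgebraicClosure F) m
    exact ⟨AlgebraicClosure F, inferInstance, inferInstance, h1, ζ, ω, hζ, hω⟩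
  let eq := SemidirectProduct.equivProd (φ := φ)
  let _ : Fintype (Gp φ) := Fintype.ofEquiv _ eq.symm
  refine ⟨_, prep F (Gp φ), fun hB => ?_⟩
  let w : (Gp φ) × Fin 2 → MvPolynomial (Fin 2) K := fun x =>
    if x.2 = 0 then (if x.1.right = 1 then C (ζ ^ (Multiplicative.toAdd x.1.left).val) * X 0 else 0)
    else C (ω ^ (Multiplicative.toAdd x.1.right).val) * X 1
  let Ψ : MvPolynomial (Fin (Fintype.card ((Gp φ) × Fin 2))) F →ₐ[F] MvPolynomial (Fin 2) K :=
    aeval fun i => w ((enum (Gp φ)).symm i)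
  have hΨX : ∀ x, Ψ (X (enum (Gp φ) x)) = w x := by intro x; simp [Ψ]
  let act : (Gp φ) → (MvPolynomial (Fin (Fintype.card ((Gp φ) × Fin 2))) F →ₐ[F]
      MvPolynomial (Fin (Fintype.card ((Gp φ) × Fin 2))) F) :=
    fun g => aeval (fun i => ∑ j, ((prep F (Gp φ) g).val i j) • (MvPolynomial.X j))
  have hact : ∀ g f, act g f = polyAct (prep F (Gp φ)) g f := fun g f => rfl
  have hCζ : (C ζ : MvPolynomial (Fin 2) K) ^ (m * n) = 1 := by rw [← C_pow, hζ.pow_eq_one, C_1]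
  have hCω : (C ω : MvPolynomial (Fin 2) K) ^ m = 1 := by rw [← C_pow, hω.pow_eq_one, C_1]
  have hA : ∀ u, Ψ (polyAct (prep F (Gp φ)) (ga φ)⁻¹ u) = scale ![ζ, 1] (Ψ u) := by
    intro u
    have : Ψ.comp (act (ga φ)⁻¹) = ((scale ![ζ, 1]).restrictScalars F).comp Ψ := by
      apply MvPolynomial.algHom_ext
      intro i
      obtain ⟨⟨h, t⟩, rfl⟩ := (enum (Gp φ)).surjective i
      simp only [AlgHom.comp_apply, hact, prep_X, hΨX, inv_inv, AlgHom.restrictScalars_apply]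
      fin_cases t
      · by_cases hh : h.right = 1
        · simp [w, scale, ga, hh, pow_val hCζ]; ring
        · simp [w, ga, hh]
      · simp [w, scale, ga]
    exact DFunLike.congr_fun this u
  have hBb : ∀ u, scale ![0, 1] (Ψ (polyAct (prep F (Gp φ)) (gb φ)⁻¹ u)) = scale ![0, ω] (Ψ u) := by
    intro u
    have : (((scale ![(0 : K), 1]).restrictScalars F).comp Ψ).comp (act (gb φ)⁻¹) =
        ((scale ![0, ω]).restrictScalars F).comp Ψ := by
      apply MvPolynomial.algHom_ext
      intro i
      obtain ⟨⟨h, t⟩, rfl⟩ := (enum (Gp φ)).surjective i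
      simp only [AlgHom.comp_apply, hact, prep_X, hΨX, inv_inv, AlgHom.restrictScalars_apply]
      fin_cases t
      · simp only [w]
        split_ifs <;> simp_all [scale]
      · simp [w, scale, gb, pow_val hCω]; ring
    exact DFunLike.congr_fun this u
  have hcoef : ∀ u, IsPolyInvariant (prep F (Gp φ)) u → ∀ e, coeff e (Ψ u) ≠ 0 →
      m * n ∣ e 0 ∧ (e 0 = 0 → m ∣ e 1) := by
    intro u hu e he
    constructor
    · have h1 := congrArg (coeff e) (hA u)
      rw [hu, coeff_scale] at h1
      rw [← hζ.pow_eq_one_iff_dvd]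
      have h2 : (ζ ^ e 0 - 1) * coeff e (Ψ u) = 0 := by
        rw [sub_mul, sub_eq_zero]; simpa using h1.symm
      exact sub_eq_zero.mp ((mul_eq_zero.mp h2).resolve_right he)
    · intro h0
      have h1 := congrArg (coeff e) (hBb u)
      rw [hu, coeff_scale, coeff_scale] at h1
      rw [← hω.pow_eq_one_iff_dvd]
      have h2 : (ω ^ e 1 - 1) * coeff e (Ψ u) = 0 := by
        rw [sub_mul, sub_eq_zero]; simpa [h0] using h1.symm
      exact sub_eq_zero.mp ((mul_eq_zero.mp h2).resolve_right he)
  have hw1 : ∀ x, (w x).IsHomogeneous 1 := by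
    intro x
    simp only [w]
    split_ifs
    · exact hom_CX _ _
    · exact isHomogeneous_zero _ _ _
    · exact hom_CX _ _
  have hdeg : ∀ u : MvPolynomial (Fin (Fintype.card ((Gp φ) × Fin 2))) F, ∀ e, coeff e (Ψ u) ≠ 0 →
      e 0 + e 1 ≤ u.totalDegree := by
    intro u e he
    rw [← sum_homogeneousComponent u, map_sum, coeff_sum] at he
    obtain ⟨i, hi, hne⟩ := Finset.exists_ne_zero_of_sum_ne_zero he
    have h1 : (Ψ (homogeneousComponent i u)).IsHomogeneous (1 * i) :=
      (homogeneousComponent_isHomogeneous i u).aeval _ fun i => hw1 _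
    have h2 : e.degree = 1 * i := by
      by_contra hh
      exact hne (h1.coeff_eq_zero hh)
    rw [Finsupp.degree_eq_sum, Fin.sum_univ_two] at h2
    rw [Finset.mem_range] at hi
    omega
  have hT : ∀ u, IsPolyInvariant (prep F (Gp φ)) u → Ψ u ∈ obs F K (m * n) m hmn hm := by
    intro u hu
    have h1 := hB u hu
    refine (Algebra.adjoin_le (S := (obs F K (m * n) m hmn hm).comap Ψ) ?_) h1
    rintro v ⟨hv, hvd⟩ e he
    refine ⟨(hcoef v hv e he).1, (hcoef v hv e he).2, ?_⟩
    rintro ⟨h2, h3⟩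
    have := hdeg v e he
    have : 1 ≤ m * n := hmn
    omega
  let f : MvPolynomial (Fin (Fintype.card ((Gp φ) × Fin 2))) F :=
    ∑ g : (Gp φ), X (enum (Gp φ) (g, 0)) ^ (m * n) * X (enum (Gp φ) (g, 1)) ^ (m - 1)
  have hf : IsPolyInvariant (prep F (Gp φ)) f := by
    intro g
    have hX : ∀ x t, act g (X (enum (Gp φ) (x, t))) = X (enum (Gp φ) (g⁻¹ * x, t)) :=
      fun x t => prep_X g x t
    rw [← hact]
    simp only [f, map_sum, map_mul, map_pow, hX]
    exact Fintype.sum_equiv (Equiv.mulLeft g⁻¹) _ _ fun h => rfl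
  let e0 : Fin 2 →₀ ℕ := Finsupp.single 0 (m * n) + Finsupp.single 1 (m - 1)
  have hcf : coeff e0 (Ψ f) = ((m * n : ℕ) : K) := by
    have h1 : ∀ g : (Gp φ), Ψ (X (enum (Gp φ) (g, 0)) ^ (m * n) * X (enum (Gp φ) (g, 1)) ^ (m - 1)) =
        if g.right = 1 then monomial e0 1 else 0 := by
      intro g
      rw [map_mul, map_pow, map_pow, hΨX, hΨX]
      by_cases hh : g.right = 1
      · have h2 : (C (ζ ^ (Multiplicative.toAdd g.left).val) : MvPolynomial (Fin 2) K) ^ (m * n) = 1 := by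
          rw [← C_pow, ← pow_mul, mul_comm _ (m * n), pow_mul, hζ.pow_eq_one, one_pow, C_1]
        have h3 : (monomial e0 1 : MvPolynomial (Fin 2) K) = X 0 ^ (m * n) * X 1 ^ (m - 1) := by
          rw [X_pow_eq_monomial, X_pow_eq_monomial, monomial_mul, one_mul]
        rw [if_pos hh, h3]
        have h4 : w (g, 0) = C (ζ ^ (Multiplicative.toAdd g.left).val) * X 0 := by
          simp only [w, hh, if_true]
        have h5 : w (g, 1) = X 1 := by simp [w, hh]
        rw [h4, h5, mul_pow, h2, one_mul]
      · rw [if_neg hh]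
        have h4 : w (g, 0) = 0 := by simp only [w, hh, if_true, if_false]
        rw [h4, zero_pow hmn.ne', zero_mul]
    simp only [f, map_sum, h1, coeff_sum]
    rw [Fintype.sum_equiv eq (fun g : Gp φ => coeff e0 (if g.right = 1 then monomial e0 (1 : K) else 0))
      (fun x => coeff e0 (if x.2 = 1 then monomial e0 (1 : K) else 0))
      (fun g => rfl), Fintype.sum_prod_type]
    simp [Finset.sum_ite_eq, apply_ite (coeff e0)]
  have := hT f hf e0 (by rw [hcf]; exact hc)
  apply this.2.2
  simp [e0]

end NN

namespace NN

section blocks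
variable {α : Type*}

lemma extract_aux {p : ℕ} (l : List α) (c : α → ZMod p) (t : Finset (Fin l.length)) :
    ∃ T : Multiset α, T ≤ (l : Multiset α) ∧ T.card = t.card ∧
      (T.map c).sum = ∑ i ∈ t, c (l.get i) ∧ ∀ d : α → ZMod p, (T.map d).sum = ∑ i ∈ t, d (l.get i) := by
  refine ⟨t.val.map l.get, ?_, by simp, by simp, fun d => by simp⟩
  have h1 : t.val.map l.get ≤ (Finset.univ : Finset (Fin l.length)).val.map l.get :=
    Multiset.map_le_map (Finset.val_le_iff.mpr (Finset.subset_univ t))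
  refine h1.trans (le_of_eq ?_)
  rw [Fin.univ_val_map]
  simp

lemma extract2 {p : ℕ} [Fact p.Prime] (L : Multiset α) (c d : α → ZMod p)
    (h : 2 * (p - 1) < L.card) :
    ∃ T ≤ L, T ≠ 0 ∧ (T.map c).sum = 0 ∧ (T.map d).sum = 0 := by
  obtain ⟨l, rfl⟩ := Quot.exists_rep L
  obtain ⟨t, -, h2, h3, h4⟩ := olson2 (Finset.univ : Finset (Fin l.length))
    (fun i => c (l.get i)) (fun i => d (l.get i)) (by simpa using h)
  obtain ⟨T, k1, k2, k3, k4⟩ := extract_aux l c t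
  refine ⟨T, k1, ?_, by rw [k3, h3], by rw [k4, h4]⟩
  rintro rfl
  have := h2.card_pos
  simp at k2
  omega

lemma extract3 {p : ℕ} [Fact p.Prime] (L : Multiset α) (c d : α → ZMod p)
    (h : 3 * (p - 1) < L.card) :
    ∃ T ≤ L, T ≠ 0 ∧ T.card ≤ p ∧ (T.map c).sum = 0 ∧ (T.map d).sum = 0 := by
  obtain ⟨l, rfl⟩ := Quot.exists_rep L
  obtain ⟨t, -, h2, h0, h3, h4⟩ := short (Finset.univ : Finset (Fin l.length))
    (fun i => c (l.get i)) (fun i => d (l.get i)) (by simpa using h)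
  obtain ⟨T, k1, k2, k3, k4⟩ := extract_aux l c t
  refine ⟨T, k1, ?_, by omega, by rw [k3, h3], by rw [k4, h4]⟩
  rintro rfl
  have := h2.card_pos
  simp at k2
  omega

/-- total content of a family of blocks -/
def cont (L : Multiset (List α)) : Multiset α := (L.map (fun l : List α => (l : Multiset α))).sum

lemma cont_add (L M : Multiset (List α)) : cont (L + M) = cont L + cont M := by
  simp [cont]

lemma cont_cons (l : List α) (M : Multiset (List α)) : cont (l ::ₘ M) = (l : Multiset α) + cont M := by
  simp [cont]

lemma cont_coe (L : List (List α)) : cont (L : Multiset (List α)) = (L.flatten : Multiset α) := by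
  induction L with
  | nil => simp [cont]
  | cons a L ih => rw [← Multiset.cons_coe, cont_cons, ih]; simp

lemma cont_mono {L M : Multiset (List α)} (h : L ≤ M) : cont L ≤ cont M := by
  obtain ⟨N, rfl⟩ := Multiset.le_iff_exists_add.mp h
  rw [cont_add]
  exact Multiset.le_add_right _ _

lemma join_block {p : ℕ} {G : Type*} [Monoid G] (P Q : G → Prop) (c d : G → ZMod p)
    (hPQ : ∀ l : List G, (∀ x ∈ l, P x) → (l.map c).sum = 0 → (l.map d).sum = 0 → Q l.prod)
    (T : Multiset (List G)) (hT : ∀ l ∈ T, l ≠ [] ∧ P l.prod) (hT0 : T ≠ 0)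
    (hc : (T.map (fun l => c l.prod)).sum = 0) (hd : (T.map (fun l => d l.prod)).sum = 0) :
    ∃ l : List G, l ≠ [] ∧ Q l.prod ∧ (l : Multiset G) = cont T := by
  obtain ⟨L, rfl⟩ := Quot.exists_rep T
  refine ⟨L.flatten, ?_, ?_, (cont_coe L).symm⟩
  · intro h
    rw [List.flatten_eq_nil_iff] at h
    cases L with
    | nil => exact hT0 rfl
    | cons a L => exact (hT a (by simp)).1 (h a (by simp))
  · rw [List.prod_flatten]
    apply hPQ
    · intro x hx
      obtain ⟨l, hl, rfl⟩ := List.mem_map.mp hx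
      exact (hT l (by simpa using hl)).2
    · simpa [Function.comp_def] using hc
    · simpa [Function.comp_def] using hd

lemma stepA {p : ℕ} [Fact p.Prime] {G : Type*} [Monoid G] (P Q : G → Prop) (c d : G → ZMod p)
    (hPQ : ∀ l : List G, (∀ x ∈ l, P x) → (l.map c).sum = 0 → (l.map d).sum = 0 → Q l.prod)
    (t : ℕ) (ht : 1 ≤ t) :
    ∀ L : Multiset (List G), (∀ l ∈ L, l ≠ [] ∧ P l.prod) → t * p + p - 1 ≤ L.card →
      ∃ L' : Multiset (List G), (∀ l ∈ L', l ≠ [] ∧ Q l.prod) ∧ L'.card = t ∧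
        cont L' ≤ cont L := by
  classical
  have hp : 2 ≤ p := (Fact.out : p.Prime).two_le
  induction t, ht using Nat.le_induction with
  | base =>
    intro L hL hcard
    obtain ⟨T, h1, h2, h3, h4⟩ := extract2 L (fun l => c l.prod) (fun l => d l.prod) (by omega)
    obtain ⟨l, k1, k2, k3⟩ := join_block P Q c d hPQ T
      (fun l hl => hL l (Multiset.mem_of_le h1 hl)) h2 h3 h4
    refine ⟨{l}, by simpa using ⟨k1, k2⟩, by simp, ?_⟩
    have : cont {l} = cont T := by rw [← k3]; simp [cont]
    rw [this]
    exact cont_mono h1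
  | succ t ht ih =>
    intro L hL hcard
    have htp : p ≤ t * p := Nat.le_mul_of_pos_left p ht
    rw [add_mul, one_mul] at hcard
    obtain ⟨T, h1, h2, h5, h3, h4⟩ := extract3 L (fun l => c l.prod) (fun l => d l.prod) (by omega)
    obtain ⟨l, k1, k2, k3⟩ := join_block P Q c d hPQ T
      (fun l hl => hL l (Multiset.mem_of_le h1 hl)) h2 h3 h4
    obtain ⟨M, rfl⟩ := Multiset.le_iff_exists_add.mp h1
    rw [Multiset.card_add] at hcard
    obtain ⟨L', j1, j2, j3⟩ := ih M (fun l hl => hL l (Multiset.mem_add.mpr (Or.inr hl))) (by omega)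
    refine ⟨l ::ₘ L', ?_, by simp [j2], ?_⟩
    · intro x hx
      rcases Multiset.mem_cons.mp hx with rfl | hx
      · exact ⟨k1, k2⟩
      · exact j1 x hx
    · rw [cont_cons, cont_add, k3]
      exact add_le_add le_rfl j3

end blocks

section filt
variable {m n : ℕ} (φ : Multiplicative (ZMod m) →* MulAut (Multiplicative (ZMod (m * n))))

/-- exponent of the normal part -/
def xl (g : Gp φ) : ℕ := (Multiplicative.toAdd g.left).val
/-- exponent of the complement part -/
def xr (g : Gp φ) : ℕ := (Multiplicative.toAdd g.right).val

variable [NeZero m] [NeZero (m * n)]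

lemma xr_mul (g h : Gp φ) : xr φ (g * h) = (xr φ g + xr φ h) % m := by
  simp [xr, ZMod.val_add]

lemma xl_mul (g h : Gp φ) : xl φ (g * h) = (xl φ g + gr φ ^ (xr φ g) * xl φ h) % (m * n) := by
  have h1 : g.right = Multiplicative.ofAdd ((xr φ g : ℕ) : ZMod m) := by simp [xr]
  have h2 : (g * h).left = g.left * h.left ^ (gr φ ^ xr φ g) := by
    rw [SemidirectProduct.mul_left]
    congr 1
    conv_lhs => rw [h1, phi_nat]
  have h3 : Multiplicative.toAdd (g * h).left =
      ((xl φ g + gr φ ^ (xr φ g) * xl φ h : ℕ) : ZMod (m * n)) := by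
    rw [h2]
    simp [xl]
  rw [xl, h3, ZMod.val_natCast]

/-- the filtration -/
def Ke (e : ℕ) (g : Gp φ) : Prop := e ∣ xl φ g ∧ e ∣ xr φ g

lemma Ke_one (e : ℕ) : Ke φ e 1 := by simp [Ke, xl, xr]

lemma Ke_mul {e : ℕ} (he : e ∣ m) {g h : Gp φ} (hg : Ke φ e g) (hh : Ke φ e h) :
    Ke φ e (g * h) := by
  constructor
  · rw [xl_mul, Nat.dvd_mod_iff (he.mul_right n)]
    exact dvd_add hg.1 (hh.1.mul_left _)
  · rw [xr_mul, Nat.dvd_mod_iff he]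
    exact dvd_add hg.2 hh.2

lemma Ke_prod {e : ℕ} (he : e ∣ m) (l : List (Gp φ)) (hl : ∀ x ∈ l, Ke φ e x) :
    Ke φ e l.prod := by
  induction l with
  | nil => exact Ke_one φ e
  | cons a l ih =>
    rw [List.prod_cons]
    exact Ke_mul φ he (hl a (by simp)) (ih fun x hx => hl x (by simp [hx]))

lemma red_aux {p e N : ℕ} (he : 0 < e) (hp : p ∣ N) (z : ℕ) :
    (((e * z) % (e * N) / e : ℕ) : ZMod p) = (z : ZMod p) := by
  rw [Nat.mul_mod_mul_left, Nat.mul_div_cancel_left _ he, ZMod.natCast_eq_natCast_iff]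
  exact (Nat.mod_modEq z N).of_dvd hp

lemma Ke_hom {e q p : ℕ} (heq : e * q = m) (hq : q ≠ 1) (hp : p = q.minFac)
    {g h : Gp φ} (hg : Ke φ e g) (hh : Ke φ e h) :
    ((xl φ (g * h) / e : ℕ) : ZMod p) = ((xl φ g / e : ℕ) : ZMod p) + ((xl φ h / e : ℕ) : ZMod p) ∧
    ((xr φ (g * h) / e : ℕ) : ZMod p) = ((xr φ g / e : ℕ) : ZMod p) + ((xr φ h / e : ℕ) : ZMod p) := by
  have hm0 : m ≠ 0 := NeZero.ne m
  have he0 : 0 < e := Nat.pos_of_ne_zero (by rintro rfl; simp at heq; omega)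
  have hq0 : 0 < q := Nat.pos_of_ne_zero (by rintro rfl; simp at heq; omega)
  have hpq : p ∣ q := hp ▸ Nat.minFac_dvd q
  have hr : gr φ ^ e ≡ 1 [MOD p] := by
    apply unit_lemma hq hq0 hp
    rw [← pow_mul, heq]
    exact (gr_pow φ).of_dvd ((hpq.trans (Dvd.intro_left e heq)).mul_right n)
  obtain ⟨⟨x, hx⟩, ⟨j, hj⟩⟩ := hg
  obtain ⟨⟨y, hy⟩, ⟨k, hk⟩⟩ := hh
  have hrj : ((gr φ ^ xr φ g : ℕ) : ZMod p) = 1 := by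
    have := (ZMod.natCast_eq_natCast_iff _ _ _).mpr (hr.pow j)
    rw [hj, pow_mul, this]; simp
  rw [xl_mul, xr_mul]
  constructor
  · have h1 : xl φ g + gr φ ^ xr φ g * xl φ h = e * (x + gr φ ^ xr φ g * y) := by
      rw [hx, hy]; ring
    have h2 : m * n = e * (q * n) := by rw [← heq]; ring
    rw [h1, h2, red_aux he0 (hpq.mul_right n), hx, hy, Nat.mul_div_cancel_left _ he0,
      Nat.mul_div_cancel_left _ he0, Nat.cast_add, Nat.cast_mul, hrj, one_mul]
  · have h1 : xr φ g + xr φ h = e * (j + k) := by rw [hj, hk]; ring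
    have h2 : ∀ z, (e * z) % m = (e * z) % (e * q) := fun z => by rw [heq]
    rw [h1, h2, red_aux he0 hpq, hj, hk, Nat.mul_div_cancel_left _ he0,
      Nat.mul_div_cancel_left _ he0, Nat.cast_add]

lemma Ke_list {e q p : ℕ} (heq : e * q = m) (hq : q ≠ 1) (hp : p = q.minFac)
    (l : List (Gp φ)) (hl : ∀ x ∈ l, Ke φ e x) :
    ((xl φ l.prod / e : ℕ) : ZMod p) = (l.map fun g => ((xl φ g / e : ℕ) : ZMod p)).sum ∧
    ((xr φ l.prod / e : ℕ) : ZMod p) = (l.map fun g => ((xr φ g / e : ℕ) : ZMod p)).sum := by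
  induction l with
  | nil => simp [xl, xr]
  | cons a l ih =>
    have hl' : ∀ x ∈ l, Ke φ e x := fun x hx => hl x (by simp [hx])
    have h1 := Ke_hom φ heq hq hp (hl a (by simp)) (Ke_prod φ (Dvd.intro q heq) l hl')
    have h2 := ih hl'
    simp only [List.prod_cons, List.map_cons, List.sum_cons, h1.1, h1.2, h2.1, h2.2, and_self]

lemma Ke_step {e q p : ℕ} (heq : e * q = m) (hq : q ≠ 1) (hp : p = q.minFac)
    (l : List (Gp φ)) (hl : ∀ x ∈ l, Ke φ e x)
    (hc : (l.map fun g => ((xl φ g / e : ℕ) : ZMod p)).sum = 0)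
    (hd : (l.map fun g => ((xr φ g / e : ℕ) : ZMod p)).sum = 0) : Ke φ (e * p) l.prod := by
  have h1 := Ke_list φ heq hq hp l hl
  have h2 := Ke_prod φ (Dvd.intro q heq) l hl
  rw [hc, hd, ZMod.natCast_eq_zero_iff, ZMod.natCast_eq_zero_iff] at h1
  constructor
  · rw [← Nat.mul_div_cancel' h2.1]; exact mul_dvd_mul_left e h1.1
  · rw [← Nat.mul_div_cancel' h2.2]; exact mul_dvd_mul_left e h1.2

lemma Ke_chain (hn : 0 < n) (q : ℕ) : ∀ e, e * q = m → ∀ L : Multiset (List (Gp φ)),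
    (∀ l ∈ L, l ≠ [] ∧ Ke φ e l.prod) → n * q + q - 1 ≤ L.card →
      ∃ L' : Multiset (List (Gp φ)), (∀ l ∈ L', l ≠ [] ∧ Ke φ m l.prod) ∧ n ≤ L'.card ∧
        cont L' ≤ cont L := by
  induction q using Nat.strong_induction_on with
  | _ q ih =>
    intro e heq L hL hcard
    by_cases hq : q = 1
    · subst hq
      rw [mul_one] at heq
      subst heq
      exact ⟨L, hL, by omega, le_rfl⟩
    have hm0 : m ≠ 0 := NeZero.ne m
    have hq0 : 0 < q := Nat.pos_of_ne_zero (by rintro rfl; simp at heq; omega)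
    obtain ⟨q', hq'⟩ := Nat.minFac_dvd q
    set p := q.minFac with hp
    have hpp : p.Prime := Nat.minFac_prime hq
    have : Fact p.Prime := ⟨hpp⟩
    have hp2 := hpp.two_le
    have hq'0 : 0 < q' := Nat.pos_of_ne_zero (by rintro rfl; omega)
    have hnq : 0 < n * q' := Nat.mul_pos hn hq'0
    have e1 : (n * q' + q' - 1) * p + p - 1 = n * q + q - 1 := by
      obtain ⟨s, hs⟩ : ∃ s, n * q' + q' = s + 1 := ⟨n * q' + q' - 1, by omega⟩
      have : n * q + q = (s + 1) * p := by rw [← hs, hq']; ring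
      rw [this, hs, Nat.add_sub_cancel, add_mul, one_mul]
    obtain ⟨L1, h1, h2, h3⟩ := stepA (p := p) (Ke φ e) (Ke φ (e * p))
      (fun g => ((xl φ g / e : ℕ) : ZMod p)) (fun g => ((xr φ g / e : ℕ) : ZMod p))
      (Ke_step φ heq hq hp) (n * q' + q' - 1) (by omega) L hL (by omega)
    obtain ⟨L2, k1, k2, k3⟩ := ih q' (by rw [hq']; nlinarith) (e * p)
      (by rw [mul_assoc, ← hq', heq]) L1 h1 (by omega)
    exact ⟨L2, k1, k2, k3.trans h3⟩

lemma Ke_ext {g h : Gp φ} (hg : Ke φ m g) (hh : Ke φ m h) (hgh : xl φ g / m = xl φ h / m) :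
    g = h := by
  have hz : ∀ g : Gp φ, Ke φ m g → g.right = 1 := by
    intro g hg
    have h1 : xr φ g = 0 := Nat.eq_zero_of_dvd_of_lt hg.2 (ZMod.val_lt _)
    have h2 := (ZMod.val_eq_zero _).mp h1
    exact Multiplicative.toAdd.injective h2
  have h1 : xl φ g = xl φ h := by
    rw [← Nat.mul_div_cancel' hg.1, ← Nat.mul_div_cancel' hh.1, hgh]
  apply SemidirectProduct.ext
  · exact Multiplicative.toAdd.injective (ZMod.val_injective _ h1)
  · rw [hz g hg, hz h hh]

lemma final_block (L : List (List (Gp φ))) (hL : ∀ l ∈ L, l ≠ [] ∧ Ke φ m l.prod)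
    (hcard : n ≤ L.length) : ∃ l : List (Gp φ), l ≠ [] ∧ l.prod = 1 ∧ l.Sublist L.flatten := by
  have hm0 : 0 < m := Nat.pos_of_ne_zero (NeZero.ne m)
  have hK : ∀ i, Ke φ m ((L.take i).map List.prod).prod := by
    intro i
    apply Ke_prod φ dvd_rfl
    intro x hx
    obtain ⟨l, hl, rfl⟩ := List.mem_map.mp hx
    exact (hL l (List.mem_of_mem_take hl)).2
  obtain ⟨i, hi, j, hj, hij, hf⟩ := Finset.exists_ne_map_eq_of_card_lt_of_maps_to
    (s := Finset.range (n + 1)) (t := Finset.range n) (by simp)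
    (f := fun i => xl φ ((L.take i).map List.prod).prod / m) (by
      intro i _
      simp only [Finset.coe_range, Set.mem_Iio]
      rw [Nat.div_lt_iff_lt_mul hm0]
      exact lt_of_lt_of_eq (ZMod.val_lt _) (mul_comm m n))
  wlog hlt : i < j generalizing i j
  · exact this j hj i hi hij.symm hf.symm (by omega)
  have heq := Ke_ext φ (hK i) (hK j) hf
  have hj' : j ≤ L.length := by simp at hj; omega
  have hsplit : L.take j = L.take i ++ (L.take j).drop i := by
    conv_lhs => rw [← List.take_append_drop i (L.take j)]
    rw [List.take_take, min_eq_left hlt.le]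
  rw [hsplit, List.map_append, List.prod_append] at heq
  have hone := left_eq_mul.mp heq
  refine ⟨((L.take j).drop i).flatten, ?_, by rw [List.prod_flatten]; exact hone, ?_⟩
  · intro h
    rw [List.flatten_eq_nil_iff] at h
    have hlen : 0 < ((L.take j).drop i).length := by simp; omega
    have hmem := List.getElem_mem hlen
    exact (hL _ (List.mem_of_mem_take (List.mem_of_mem_drop hmem))).1 (h _ hmem)
  · exact ((List.drop_sublist _ _).trans (List.take_sublist _ _)).flatten

lemma dav_upper (hn : 0 < n) (S : Multiset (Gp φ)) (hS : m * n + m - 1 ≤ S.card) :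
    ¬ ProductOneFree S := by
  intro hfree
  have hcont : cont (S.map fun g => [g]) = S := by
    rw [cont, Multiset.map_map]
    exact Multiset.sum_map_singleton S
  obtain ⟨L, h1, h2, h3⟩ := Ke_chain φ hn m 1 (one_mul m) (S.map fun g => [g])
    (by
      intro l hl
      obtain ⟨g, -, rfl⟩ := Multiset.mem_map.mp hl
      exact ⟨by simp, one_dvd _, one_dvd _⟩)
    (by rw [Multiset.card_map, mul_comm n m]; exact hS)
  obtain ⟨L, rfl⟩ := Quot.exists_rep L
  obtain ⟨l, k1, k2, k3⟩ := final_block φ L (fun l hl => h1 l (by simpa using hl)) (by simpa using h2)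
  have h4 : cont (L : Multiset (List (Gp φ))) ≤ S := by rw [← hcont]; exact h3
  refine hfree (l : Multiset (Gp φ)) ?_ (by simpa using k1) ⟨l, rfl, k2⟩
  refine le_trans ?_ h4
  rw [cont_coe]
  exact Multiset.coe_le.mpr k3.subperm

lemma dav_lower (hn : 0 < n) :
    ProductOneFree (Multiset.replicate (m * n - 1) (ga φ) + Multiset.replicate (m - 1) (gb φ)) := by
  classical
  have hm0 : 0 < m := Nat.pos_of_ne_zero (NeZero.ne m)
  have hmn : 0 < m * n := Nat.mul_pos hm0 hn
  rintro T hT hT0 ⟨l, rfl, hl⟩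
  obtain ⟨A, hA, B, hB, hAB⟩ : ∃ A ≤ Multiset.replicate (m * n - 1) (ga φ),
      ∃ B ≤ Multiset.replicate (m - 1) (gb φ), (l : Multiset (Gp φ)) = A + B := by
    refine ⟨_, Multiset.inter_le_right (s := (l : Multiset (Gp φ))),
      (l : Multiset (Gp φ)) - Multiset.replicate (m * n - 1) (ga φ), ?_, ?_⟩
    · exact tsub_le_iff_left.mpr hT
    · rw [add_comm, Multiset.sub_add_inter]
  obtain ⟨i, hi, rfl⟩ := Multiset.le_replicate_iff.mp hA
  obtain ⟨j, hj, rfl⟩ := Multiset.le_replicate_iff.mp hB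
  have hr : (SemidirectProduct.rightHom : Gp φ →* _) l.prod = 1 := by rw [hl, map_one]
  rw [map_list_prod, ← Multiset.prod_coe, ← Multiset.map_coe, hAB] at hr
  simp only [Multiset.map_add, Multiset.map_replicate, Multiset.prod_add, Multiset.prod_replicate,
    ga, gb, SemidirectProduct.rightHom_inl, SemidirectProduct.rightHom_inr, one_pow, one_mul,
    ofAdd_one_pow] at hr
  have hj0 : j = 0 := by
    have h1 : ((j : ℕ) : ZMod m) = 0 := Multiplicative.ofAdd.injective hr
    rw [ZMod.natCast_eq_zero_iff] at h1
    exact Nat.eq_zero_of_dvd_of_lt h1 (by omega)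
  subst hj0
  have hl2 : l = List.replicate i (ga φ) := by
    have : (l : Multiset (Gp φ)) = ((List.replicate i (ga φ) : List (Gp φ)) : Multiset (Gp φ)) := by
      rw [hAB, Multiset.coe_replicate]; simp
    exact List.perm_replicate.mp (Multiset.coe_eq_coe.mp this)
  rw [hl2, List.prod_replicate, ga_pow] at hl
  have h1 : ((i : ℕ) : ZMod (m * n)) = 0 := by
    have := congrArg SemidirectProduct.left hl
    exact Multiplicative.ofAdd.injective this
  rw [ZMod.natCast_eq_zero_iff] at h1
  have hi0 : i = 0 := Nat.eq_zero_of_dvd_of_lt h1 (by omega)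
  subst hi0
  exact hT0 (by simp [hl2])

end filt

theorem davenport (m n : ℕ) (hm : 0 < m) (hn : 0 < n)
    (φ : Multiplicative (ZMod m) →* MulAut (Multiplicative (ZMod (m * n)))) (dav : ℕ)
    (h : IsGreatest {c : ℕ |
        ∃ S : Multiset (Multiplicative (ZMod (m * n)) ⋊[φ] Multiplicative (ZMod m)),
          Multiset.card S = c ∧ ProductOneFree S} dav) : dav = m * n + m - 2 := by
  have hmn : 0 < m * n := Nat.mul_pos hm hn
  have : NeZero m := ⟨hm.ne'⟩
  have : NeZero (m * n) := ⟨hmn.ne'⟩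
  obtain ⟨⟨S, hS, hfree⟩, hub⟩ := h
  apply le_antisymm
  · by_contra hlt
    exact dav_upper φ hn S (by omega) hfree
  · apply hub
    refine ⟨_, ?_, dav_lower φ hn⟩
    simp
    omega

end NN

/-- For `G = C_m ⋉_φ C_{mn}` (of order `m²n`) and a base field of characteristic
not dividing `|G|`, the Noether number equals `mn + m − 1`: every invariant ring
of a finite dimensional `G`-module is generated in degrees `≤ mn + m − 1`, and
this bound is attained; moreover `β(G) = d(G) + 1`, i.e. the small Davenport
constant equals `mn + m − 2`. -/
theorem noether_number_semidirect (m n : ℕ) (hm : 0 < m) (hn : 0 < n)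
    (φ : Multiplicative (ZMod m) →* MulAut (Multiplicative (ZMod (m * n))))
    (F : Type*) [Field F] (hF : ¬ (ringChar F ∣ m ^ 2 * n)) :
    (∀ (d : ℕ) (ρ : (Multiplicative (ZMod (m * n)) ⋊[φ] Multiplicative (ZMod m)) →*
        Matrix.GeneralLinearGroup (Fin d) F),
      NoetherBoundLe ρ (m * n + m - 1)) ∧
    (∃ (d : ℕ) (ρ : (Multiplicative (ZMod (m * n)) ⋊[φ] Multiplicative (ZMod m)) →*
        Matrix.GeneralLinearGroup (Fin d) F),
      ¬ NoetherBoundLe ρ (m * n + m - 2)) ∧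
    ∀ dav : ℕ,
      IsGreatest {c : ℕ |
        ∃ S : Multiset (Multiplicative (ZMod (m * n)) ⋊[φ] Multiplicative (ZMod m)),
          Multiset.card S = c ∧ ProductOneFree S} dav →
      dav = m * n + m - 2 := by
  exact ⟨fun d ρ => NN.upper m n hm hn φ F hF d ρ, NN.lower m n hm hn φ F hF,
    fun dav h => NN.davenport m n hm hn φ dav h⟩
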